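/- arXiv:1903.07019 — 2 statements merged into one kernel-verified Lean document; each statement's English description precedes it below -/
import Mathlib

section
/- Let S be a finite family of at least 2 pairwise disjoint segments in ℝ² that are all parallel (all segments have the same direction) and whose endpoints do not all lie on a single line. Then S admits a circumscribing polygon. -/
noncomputable section

/-- A point of the plane. -/
abbrev Pt : Type := ℝ × ℝ

/-- The closed segment with endpoints `a` and `b`. -/
def Seg (a b : Pt) : Set Pt := segment ℝ a b

/-- The set of endpoints of the segments of a family `S`. -/
def SegEndpoints (S : Finset (Pt × Pt)) : Set Pt :=
  ⋃ s ∈ (S : Set (Pt × Pt)), ({s.1, s.2} : Set Pt)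

/-- `S` is a family of (nondegenerate) pairwise disjoint segments. -/
def DisjointFamily (S : Finset (Pt × Pt)) : Prop :=
  (∀ s ∈ S, s.1 ≠ s.2) ∧
  (S : Set (Pt × Pt)).Pairwise (fun s t => Disjoint (Seg s.1 s.2) (Seg t.1 t.2))

/-- No three endpoints of segments of `S` are collinear. -/
def GeneralPosition (S : Finset (Pt × Pt)) : Prop :=
  ∀ p ∈ SegEndpoints S, ∀ q ∈ SegEndpoints S, ∀ r ∈ SegEndpoints S,
    p ≠ q → p ≠ r → q ≠ r → ¬ Collinear ℝ ({p, q, r} : Set Pt)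

/-- A simple polygon: a cyclic sequence of `k ≥ 3` pairwise distinct vertices such that
two edges intersect iff they are consecutive, and consecutive edges meet exactly in
their common endpoint. -/
structure SimplePolygon : Type where
  k : ℕ
  three_le : 3 ≤ k
  vtx : ZMod k → Pt
  inj : Function.Injective vtx
  edge_inter : ∀ i j : ZMod k, i ≠ j →
    ((Seg (vtx i) (vtx (i + 1)) ∩ Seg (vtx j) (vtx (j + 1))).Nonempty ↔
      (j = i + 1 ∨ i = j + 1))
  edge_consec : ∀ i : ZMod k,
    Seg (vtx i) (vtx (i + 1)) ∩ Seg (vtx (i + 1)) (vtx (i + 2)) = {vtx (i + 1)}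

/-- The union of the edges of a simple polygon. -/
def SimplePolygon.edgeUnion (P : SimplePolygon) : Set Pt :=
  ⋃ i : ZMod P.k, Seg (P.vtx i) (P.vtx (i + 1))

/-- The closed region of a simple polygon: the union of its edges together with all
bounded connected components of the complement of the union of the edges. -/
def SimplePolygon.closedRegion (P : SimplePolygon) : Set Pt :=
  P.edgeUnion ∪
    {x | x ∉ P.edgeUnion ∧ Bornology.IsBounded (connectedComponentIn (P.edgeUnion)ᶜ x)}

/-- `P` is a circumscribing polygon for `S`: its vertex set is exactly the set of
endpoints of segments of `S`, and every segment of `S` lies in the closed region of `P`. -/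
def IsCircumscribing (S : Finset (Pt × Pt)) (P : SimplePolygon) : Prop :=
  Set.range P.vtx = SegEndpoints S ∧ ∀ s ∈ S, Seg s.1 s.2 ⊆ P.closedRegion

section helpers

variable (φ X : Pt →ₗ[ℝ] ℝ)

lemma seg_coord {a b z : Pt} (hz : z ∈ Seg a b) :
    ∃ t : ℝ, 0 ≤ t ∧ t ≤ 1 ∧ z = a + t • (b - a) ∧
      ∀ f : Pt →ₗ[ℝ] ℝ, f z = f a + t * (f b - f a) := by
  obtain ⟨p, q, hp, hq, hpq, rfl⟩ := hz
  refine ⟨q, hq, by linarith, ?_, ?_⟩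
  · have : p = 1 - q := by linarith
    subst this
    module
  · intro f
    have : p = 1 - q := by linarith
    subst this
    simp only [map_add, map_smul, smul_eq_mul]
    ring

lemma seg_le {a b z : Pt} (h : φ a ≤ φ b) (hz : z ∈ Seg a b) : φ a ≤ φ z ∧ φ z ≤ φ b := by
  obtain ⟨t, h0, h1, -, hf⟩ := seg_coord hz
  rw [hf φ]
  constructor <;> nlinarith

lemma seg_eq_left {a b z : Pt} (h : φ a < φ b) (hz : z ∈ Seg a b) (hle : φ z ≤ φ a) : z = a := by
  obtain ⟨t, h0, h1, he, hf⟩ := seg_coord hz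
  rw [hf φ] at hle
  have : t = 0 := by
    by_contra hne
    have : 0 < t := lt_of_le_of_ne h0 (Ne.symm hne)
    nlinarith
  subst this
  simpa using he

lemma seg_eq_right {a b z : Pt} (h : φ a < φ b) (hz : z ∈ Seg a b) (hle : φ b ≤ φ z) : z = b := by
  obtain ⟨t, h0, h1, he, hf⟩ := seg_coord hz
  rw [hf φ] at hle
  have : t = 1 := by
    by_contra hne
    have : t < 1 := lt_of_le_of_ne h1 hne
    nlinarith
  subst this
  simpa using he

lemma left_mem_Seg (a b : Pt) : a ∈ Seg a b := left_mem_segment ℝ a b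
lemma right_mem_Seg (a b : Pt) : b ∈ Seg a b := right_mem_segment ℝ a b
lemma Seg_symm (a b : Pt) : Seg a b = Seg b a := segment_symm ℝ a b

lemma chain_lt (u : ℕ → Pt) (r : ℕ) (hu : ∀ i < r, φ (u i) < φ (u (i + 1))) :
    ∀ i j, i < j → j ≤ r → φ (u i) < φ (u j) := by
  intro i j hij
  induction j, hij using Nat.le_induction with
  | base => intro h; exact hu i (by omega)
  | succ n hn ih => intro h; exact (ih (by omega)).trans (hu n (by omega))

lemma chain_le (u : ℕ → Pt) (r : ℕ) (hu : ∀ i < r, φ (u i) < φ (u (i + 1))) :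
    ∀ i j, i ≤ j → j ≤ r → φ (u i) ≤ φ (u j) := by
  intro i j hij hj
  rcases hij.eq_or_lt with rfl | h
  · exact le_rfl
  · exact (chain_lt φ u r hu i j h hj).le

lemma chain_interp (u : ℕ → Pt) (r : ℕ) (hu : ∀ i < r, φ (u i) < φ (u (i + 1))) :
    ∃ T : ℝ → ℝ, Continuous T ∧ ∀ i < r, ∀ w ∈ Seg (u i) (u (i + 1)), T (φ w) = X w := by
  suffices h : ∃ T : ℝ → ℝ, Continuous T ∧ T (φ (u r)) = X (u r) ∧
      ∀ i < r, ∀ w ∈ Seg (u i) (u (i + 1)), T (φ w) = X w by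
    obtain ⟨T, h1, -, h2⟩ := h
    exact ⟨T, h1, h2⟩
  induction r with
  | zero => exact ⟨fun _ => X (u 0), continuous_const, rfl, by intro i hi; omega⟩
  | succ r ih =>
    obtain ⟨T, hT, hTr, hTi⟩ := ih (fun i hi => hu i (by omega))
    have hlt := hu r (by omega)
    set a := φ (u r) with ha
    set b := φ (u (r + 1)) with hb
    have hab : b - a ≠ 0 := by linarith
    refine ⟨fun t => T (min t a) + (X (u (r + 1)) - X (u r)) / (b - a) * (max t a - a),
      by fun_prop, ?_, ?_⟩
    · simp only [min_eq_right hlt.le, max_eq_left hlt.le, hTr]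
      field_simp
      ring
    · intro i hi w hw
      rcases Nat.lt_succ_iff_lt_or_eq.mp hi with h | rfl
      · have hle : φ w ≤ a := (seg_le φ (hu i (by omega)).le hw).2.trans
          (chain_le φ u (r + 1) hu (i + 1) r (by omega) (by omega))
        simp only [min_eq_left hle, max_eq_right hle, hTi i h w hw]
        ring
      · have hle : a ≤ φ w := (seg_le φ (hu i (by omega)).le hw).1
        obtain ⟨t, h0, h1, -, hf⟩ := seg_coord hw
        simp only [min_eq_right hle, max_eq_left hle, hTr]
        rw [hf φ, hf X, ← ha, ← hb]
        field_simp
        ring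

lemma chain_cover (u : ℕ → Pt) (r : ℕ) (hr : 1 ≤ r) (hu : ∀ i < r, φ (u i) < φ (u (i + 1)))
    (t : ℝ) (h0 : φ (u 0) ≤ t) (h1 : t ≤ φ (u r)) :
    ∃ i < r, ∃ w ∈ Seg (u i) (u (i + 1)), φ w = t := by
  have hex : ∃ i < r, φ (u i) ≤ t ∧ t ≤ φ (u (i + 1)) := by
    induction r, hr using Nat.le_induction with
    | base => exact ⟨0, by omega, h0, h1⟩
    | succ n hn ih =>
      by_cases h : t ≤ φ (u n)
      · obtain ⟨i, hi, h⟩ := ih (fun i hi => hu i (by omega)) h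
        exact ⟨i, by omega, h⟩
      · exact ⟨n, by omega, by linarith, h1⟩
  obtain ⟨i, hi, ha, hb⟩ := hex
  have hlt := hu i hi
  set a := φ (u i) with ha'
  set b := φ (u (i + 1)) with hb'
  have hab : 0 < b - a := by linarith
  refine ⟨i, hi, (1 - (t - a) / (b - a)) • u i + ((t - a) / (b - a)) • u (i + 1),
    ⟨_, _, ?_, ?_, by ring, rfl⟩, ?_⟩
  · rw [sub_nonneg, div_le_one hab]; linarith
  · exact div_nonneg (by linarith) hab.le
  · simp only [map_add, map_smul, smul_eq_mul, ← ha', ← hb']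
    field_simp
    ring

/-- Points between the two chains lie in the union of the edges or in a bounded component. -/
lemma region (hinj : ∀ p q : Pt, φ p = φ q → X p = X q → p = q)
    (u l : ℕ → Pt) (r s : ℕ) (hr : 1 ≤ r) (hs : 1 ≤ s)
    (hu : ∀ i < r, φ (u i) < φ (u (i + 1))) (hl : ∀ i < s, φ (l i) < φ (l (i + 1)))
    (h0 : u 0 = l 0) (h1 : u r = l s) (E : Set Pt)
    (hE : ∀ z, z ∈ E ↔ (∃ i < r, z ∈ Seg (u i) (u (i + 1))) ∨ ∃ i < s, z ∈ Seg (l i) (l (i + 1)))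
    (z : Pt) (hz0 : φ (u 0) ≤ φ z) (hz1 : φ z ≤ φ (u r))
    (hzu : ∀ i < r, ∀ w ∈ Seg (u i) (u (i + 1)), φ w = φ z → X w ≤ X z)
    (hzl : ∀ i < s, ∀ w ∈ Seg (l i) (l (i + 1)), φ w = φ z → X z ≤ X w) (hzE : z ∉ E) :
    Bornology.IsBounded (connectedComponentIn Eᶜ z) := by
  obtain ⟨T, hTc, hT⟩ := chain_interp φ X u r hu
  obtain ⟨B, hBc, hB⟩ := chain_interp φ X l s hl
  have hφc : Continuous φ := φ.continuous_of_finiteDimensional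
  have hXc : Continuous X := X.continuous_of_finiteDimensional
  have hTE : ∀ p, φ (u 0) ≤ φ p → φ p ≤ φ (u r) → X p = T (φ p) → p ∈ E := by
    intro p hp0 hp1 hp
    obtain ⟨i, hi, w, hw, hwt⟩ := chain_cover φ u r hr hu _ hp0 hp1
    have : w = p := hinj _ _ hwt (by rw [hp, ← hwt, hT i hi w hw])
    exact (hE p).2 (Or.inl ⟨i, hi, this ▸ hw⟩)
  have hBE : ∀ p, φ (u 0) ≤ φ p → φ p ≤ φ (u r) → X p = B (φ p) → p ∈ E := by
    intro p hp0 hp1 hp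
    rw [h0] at hp0
    rw [h1] at hp1
    obtain ⟨i, hi, w, hw, hwt⟩ := chain_cover φ l s hs hl _ hp0 hp1
    have : w = p := hinj _ _ hwt (by rw [hp, ← hwt, hB i hi w hw])
    exact (hE p).2 (Or.inr ⟨i, hi, this ▸ hw⟩)
  have hT0 : T (φ (u 0)) = X (u 0) := hT 0 (by omega) _ (left_mem_Seg _ _)
  have hB0 : B (φ (u 0)) = X (u 0) := by
    rw [h0]; exact hB 0 (by omega) _ (left_mem_Seg _ _)
  have hT1 : T (φ (u r)) = X (u r) := by
    obtain ⟨r', rfl⟩ : ∃ r', r = r' + 1 := ⟨r - 1, by omega⟩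
    exact hT r' (by omega) _ (right_mem_Seg _ _)
  have hB1 : B (φ (u r)) = X (u r) := by
    rw [h1]
    obtain ⟨r', rfl⟩ : ∃ r', s = r' + 1 := ⟨s - 1, by omega⟩
    exact hB r' (by omega) _ (right_mem_Seg _ _)
  set A : Set Pt := {p | φ (u 0) ≤ φ p ∧ φ p ≤ φ (u r) ∧ T (φ p) ≤ X p ∧ X p ≤ B (φ p)} with hA
  set F : Set Pt := {p | φ p ≤ φ (u 0) ∨ φ (u r) ≤ φ p ∨ X p ≤ T (φ p) ∨ B (φ p) ≤ X p} with hF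
  have hTφ : Continuous fun p => T (φ p) := hTc.comp hφc
  have hBφ : Continuous fun p => B (φ p) := hBc.comp hφc
  have hAc : IsClosed A :=
    (isClosed_le continuous_const hφc).inter ((isClosed_le hφc continuous_const).inter
      ((isClosed_le hTφ hXc).inter (isClosed_le hXc hBφ)))
  have hFc : IsClosed F :=
    (isClosed_le hφc continuous_const).union ((isClosed_le continuous_const hφc).union
      ((isClosed_le hXc hTφ).union (isClosed_le hBφ hXc)))
  have hcov : ∀ p, p ∈ A ∨ p ∈ F := by
    intro p
    by_cases h : p ∈ F
    · exact Or.inr h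
    · left
      simp only [hF, Set.mem_ofPred_eq, not_or, not_le] at h
      exact ⟨h.1.le, h.2.1.le, h.2.2.1.le, h.2.2.2.le⟩
  have hAF : ∀ p, p ∈ A → p ∈ F → p ∈ E := by
    rintro p ⟨ha, hb, hc, hd⟩ (h | h | h | h)
    · have e : φ p = φ (u 0) := le_antisymm h ha
      rw [e] at hc hd
      exact hTE p ha hb (by rw [e]; linarith)
    · have e : φ p = φ (u r) := le_antisymm hb h
      rw [e] at hc hd
      exact hTE p ha hb (by rw [e]; linarith)
    · exact hTE p ha hb (le_antisymm h hc)
    · exact hBE p ha hb (le_antisymm hd h)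
  have hzA : z ∈ A := by
    refine ⟨hz0, hz1, ?_, ?_⟩
    · obtain ⟨i, hi, w, hw, hwt⟩ := chain_cover φ u r hr hu _ hz0 hz1
      rw [← hwt, hT i hi w hw]
      exact hzu i hi w hw hwt
    · obtain ⟨i, hi, w, hw, hwt⟩ := chain_cover φ l s hs hl _ (h0 ▸ hz0) (h1 ▸ hz1)
      rw [← hwt, hB i hi w hw]
      exact hzl i hi w hw hwt
  have hsub : connectedComponentIn Eᶜ z ⊆ A := by
    intro p hp
    by_contra hpA
    have hpre : IsPreconnected (connectedComponentIn Eᶜ z) := isPreconnected_connectedComponentIn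
    rw [isPreconnected_closed_iff] at hpre
    obtain ⟨q, hq, hqA, hqF⟩ := hpre A F hAc hFc (fun q _ => hcov q)
      ⟨z, mem_connectedComponentIn hzE, hzA⟩ ⟨p, hp, (hcov p).resolve_left hpA⟩
    exact connectedComponentIn_subset _ _ hq (hAF q hqA hqF)
  refine Bornology.IsBounded.subset ?_ hsub
  let e0 : Pt →ₗ[ℝ] Pt := φ.prod X
  have he0 : Function.Injective e0 := by
    intro p q hpq
    have hpq' : ((φ p, X p) : ℝ × ℝ) = (φ q, X q) := hpq
    exact hinj _ _ (congrArg Prod.fst hpq') (congrArg Prod.snd hpq')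
  let e : Pt ≃L[ℝ] Pt := (LinearEquiv.ofInjectiveEndo e0 he0).toContinuousLinearEquiv
  have he : ∀ p, e p = (φ p, X p) := fun p => rfl
  set I := Set.Icc (φ (u 0)) (φ (u r))
  have hIc : IsCompact I := isCompact_Icc
  obtain ⟨m, hm⟩ := (hIc.image hTc).bddBelow
  obtain ⟨M, hM⟩ := (hIc.image hBc).bddAbove
  have hcomp : IsCompact (e.symm '' (I ×ˢ Set.Icc m M)) :=
    (hIc.prod isCompact_Icc).image e.symm.continuous
  refine hcomp.isBounded.subset ?_
  rintro p ⟨ha, hb, hc, hd⟩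
  refine ⟨e p, ?_, by simp⟩
  rw [he]
  exact ⟨⟨ha, hb⟩, (hm ⟨_, ⟨ha, hb⟩, rfl⟩).trans hc, hd.trans (hM ⟨_, ⟨ha, hb⟩, rfl⟩)⟩

/-- Vertex sequence of the polygon formed by two chains. -/
def polyW (u l : ℕ → Pt) (r s : ℕ) (n : ℕ) : Pt := if n ≤ r then u n else l (r + s - n)

lemma poly_edges (u l : ℕ → Pt) (r s : ℕ) (hr : 1 ≤ r) (hs : 2 ≤ s)
    (hu : ∀ i < r, φ (u i) < φ (u (i + 1))) (hl : ∀ i < s, φ (l i) < φ (l (i + 1)))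
    (h0 : u 0 = l 0) (h1 : u r = l s)
    (hd : ∀ i < r, ∀ j < s, ∀ z, z ∈ Seg (u i) (u (i + 1)) → z ∈ Seg (l j) (l (j + 1)) →
      z = u 0 ∨ z = u r) (n n' : ℕ) (hn : n < n') (hn' : n' < r + s) (z : Pt)
    (hz : z ∈ Seg (polyW u l r s n) (polyW u l r s (n + 1)))
    (hz' : z ∈ Seg (polyW u l r s n') (polyW u l r s (n' + 1))) :
    (n' = n + 1 ∧ z = polyW u l r s n') ∨ (n = 0 ∧ n' + 1 = r + s ∧ z = polyW u l r s 0) := by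
  have hU : ∀ n < r, polyW u l r s n = u n ∧ polyW u l r s (n + 1) = u (n + 1) := by
    intro n hn
    exact ⟨if_pos (by omega), if_pos (by omega)⟩
  have hL : ∀ n, r ≤ n → n < r + s → polyW u l r s n = l (r + s - n - 1 + 1) ∧
      polyW u l r s (n + 1) = l (r + s - n - 1) := by
    intro n hn hn2
    constructor
    · unfold polyW
      split_ifs with h
      · have : n = r := by omega
        subst this
        rw [h1]; congr 1; omega
      · congr 1; omega
    · unfold polyW
      rw [if_neg (by omega)]; congr 1
  have hW0 : polyW u l r s 0 = u 0 := if_pos (by omega)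
  rcases lt_or_ge n' r with hn'r | hn'r
  · rw [(hU n (by omega)).1, (hU n (by omega)).2] at hz
    rw [(hU n' (by omega)).1, (hU n' (by omega)).2] at hz'
    have a1 := (seg_le φ (hu n (by omega)).le hz).2
    have a2 := (seg_le φ (hu n' (by omega)).le hz').1
    left
    have : n' = n + 1 := by
      by_contra hne
      have := chain_lt φ u r hu (n + 1) n' (by omega) (by omega)
      linarith
    subst this
    refine ⟨rfl, ?_⟩
    rw [(hU _ hn'r).1]
    exact seg_eq_right φ (hu n (by omega)) hz a2
  · rw [(hL n' hn'r hn').1, (hL n' hn'r hn').2, Seg_symm] at hz'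
    rcases lt_or_ge n r with hnr | hnr
    · rw [(hU n (by omega)).1, (hU n (by omega)).2] at hz
      rcases hd n hnr (r + s - n' - 1) (by omega) z hz hz' with rfl | rfl
      · right
        have a1 := (seg_le φ (hu n (by omega)).le hz).1
        have a2 := (seg_le φ (hl (r + s - n' - 1) (by omega)).le hz').1
        refine ⟨?_, ?_, hW0.symm⟩
        · by_contra hne
          have := chain_lt φ u r hu 0 n (by omega) (by omega)
          linarith
        · by_contra hne
          have := chain_lt φ l s hl 0 (r + s - n' - 1) (by omega) (by omega)
          rw [h0] at a2
          linarith
      · left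
        have a1 := (seg_le φ (hu n (by omega)).le hz).2
        have a2 := (seg_le φ (hl (r + s - n' - 1) (by omega)).le hz').2
        have b1 : n + 1 = r := by
          by_contra hne
          have := chain_lt φ u r hu (n + 1) r (by omega) (by omega)
          linarith
        have b2 : n' = r := by
          by_contra hne
          have := chain_lt φ l s hl (r + s - n' - 1 + 1) s (by omega) (by omega)
          rw [h1] at a2
          linarith
        subst b2
        exact ⟨b1.symm, (if_pos le_rfl).symm⟩
    · rw [(hL n hnr (by omega)).1, (hL n hnr (by omega)).2, Seg_symm] at hz
      have a1 := (seg_le φ (hl (r + s - n - 1) (by omega)).le hz).1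
      have a2 := (seg_le φ (hl (r + s - n' - 1) (by omega)).le hz').2
      left
      have : n' = n + 1 := by
        by_contra hne
        have := chain_lt φ l s hl (r + s - n' - 1 + 1) (r + s - n - 1) (by omega) (by omega)
        linarith
      subst this
      refine ⟨rfl, ?_⟩
      rw [(hL n hnr (by omega)).2]
      have e : r + s - (n + 1) - 1 + 1 = r + s - n - 1 := by omega
      rw [e] at a2
      exact seg_eq_left φ (hl _ (by omega)) hz a2

lemma exists_poly (u l : ℕ → Pt) (r s : ℕ) (hr : 1 ≤ r) (hs : 2 ≤ s)
    (hu : ∀ i < r, φ (u i) < φ (u (i + 1))) (hl : ∀ i < s, φ (l i) < φ (l (i + 1)))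
    (h0 : u 0 = l 0) (h1 : u r = l s)
    (hd : ∀ i < r, ∀ j < s, ∀ z, z ∈ Seg (u i) (u (i + 1)) → z ∈ Seg (l j) (l (j + 1)) →
      z = u 0 ∨ z = u r) :
    ∃ P : SimplePolygon, (∀ z, z ∈ Set.range P.vtx ↔ (∃ i ≤ r, u i = z) ∨ ∃ i ≤ s, l i = z) ∧
      ∀ z, z ∈ P.edgeUnion ↔
        (∃ i < r, z ∈ Seg (u i) (u (i + 1))) ∨ ∃ i < s, z ∈ Seg (l i) (l (i + 1)) := by
  have key := poly_edges φ u l r s hr hs hu hl h0 h1 hd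
  set w := polyW u l r s with hw
  have hk : NeZero (r + s) := ⟨by omega⟩
  have hU : ∀ n ≤ r, w n = u n := fun n hn => if_pos hn
  have hL : ∀ n, r ≤ n → n ≤ r + s → w n = l (r + s - n) := by
    intro n hn hn2
    rw [hw]
    unfold polyW
    split_ifs with h
    · have : n = r := by omega
      subst this
      rw [h1]; congr 1; omega
    · rfl
  have hwk : w (r + s) = w 0 := by
    rw [hL _ (by omega) le_rfl, hU 0 (by omega), h0]; simp
  have hne : ∀ n < r + s, w n ≠ w (n + 1) := by
    intro n hn h
    have h := congrArg φ h
    rcases lt_or_ge n r with hnr | hnr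
    · rw [hU _ hnr.le, hU _ hnr] at h
      have := hu n hnr
      linarith
    · rw [hL _ hnr hn.le, hL _ (by omega) hn] at h
      have := chain_lt φ l s hl (r + s - (n + 1)) (r + s - n) (by omega) (by omega)
      linarith
  have hval : ∀ i : ZMod (r + s), i.val < r + s := fun i => ZMod.val_lt i
  have hsucc : ∀ i : ZMod (r + s),
      (i.val + 1 < r + s ∧ (i + 1).val = i.val + 1) ∨ (i.val + 1 = r + s ∧ (i + 1).val = 0) := by
    intro i
    have h1v : (1 : ZMod (r + s)).val = 1 := by
      have : Fact (1 < r + s) := ⟨by omega⟩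
      exact ZMod.val_one _
    have := hval i
    rw [ZMod.val_add, h1v]
    rcases (show i.val + 1 < r + s ∨ i.val + 1 = r + s by omega) with h | h
    · left; exact ⟨h, Nat.mod_eq_of_lt h⟩
    · right; exact ⟨h, by rw [h, Nat.mod_self]⟩
  have hnext : ∀ i : ZMod (r + s), w (i + 1).val = w (i.val + 1) := by
    intro i
    rcases hsucc i with h | h
    · rw [h.2]
    · rw [h.2, h.1, hwk]
  have hinjw : ∀ n n', n < n' → n' < r + s → w n ≠ w n' := by
    intro n n' hn hn' he
    rcases key n n' hn hn' (w n) (left_mem_Seg _ _) (he ▸ left_mem_Seg _ _) with h | h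
    · rw [h.1] at he
      exact hne n (by omega) he
    · apply hne n' hn'
      rw [h.2.1, hwk, ← he, h.2.2]
  have hedge : ∀ i : ZMod (r + s), Seg (w i.val) (w (i + 1).val) = Seg (w i.val) (w (i.val + 1)) := by
    intro i; rw [hnext]
  have hadj : ∀ i j : ZMod (r + s), i.val < j.val → ∀ z,
      z ∈ Seg (w i.val) (w (i.val + 1)) → z ∈ Seg (w j.val) (w (j.val + 1)) →
      (j = i + 1 ∨ i = j + 1) := by
    intro i j hij z hz hz'
    rcases key _ _ hij (hval j) z hz hz' with h | h
    · left
      apply ZMod.val_injective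
      have := hval j
      rcases hsucc i with h' | h' <;> omega
    · right
      apply ZMod.val_injective
      rcases hsucc j with h' | h' <;> omega
  let P : SimplePolygon :=
    { k := r + s
      three_le := by omega
      vtx := fun i => w i.val
      inj := by
        intro i j hij
        apply ZMod.val_injective
        rcases lt_trichotomy i.val j.val with h | h | h
        · exact absurd hij (hinjw _ _ h (hval j))
        · exact h
        · exact absurd hij.symm (hinjw _ _ h (hval i))
      edge_inter := by
        intro i j hij
        constructor
        · rintro ⟨z, hz, hz'⟩
          rw [hedge] at hz hz'
          have hne' : i.val ≠ j.val := fun h => hij (ZMod.val_injective _ h)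
          rcases lt_or_gt_of_ne hne' with h | h
          · exact hadj i j h z hz hz'
          · exact (hadj j i h z hz' hz).symm
        · rintro (rfl | rfl)
          · exact ⟨_, right_mem_Seg _ _, left_mem_Seg _ _⟩
          · exact ⟨_, left_mem_Seg _ _, right_mem_Seg _ _⟩
      edge_consec := by
        intro i
        have e2 : i + 2 = (i + 1) + 1 := by ring
        simp only [e2]
        apply Set.eq_singleton_iff_unique_mem.2
        refine ⟨⟨right_mem_Seg _ _, left_mem_Seg _ _⟩, ?_⟩
        rintro z ⟨hz, hz'⟩
        rw [hedge] at hz hz'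
        rcases hsucc i with h | h
        · rcases key i.val (i + 1).val (by omega) (hval _) z hz hz' with h' | h'
          · exact h'.2
          · omega
        · rcases key (i + 1).val i.val (by omega) (hval _) z hz' hz with h' | h'
          · omega
          · rw [h'.1]; exact h'.2.2 }
  refine ⟨P, ?_, ?_⟩
  · intro z
    constructor
    · rintro ⟨i, rfl⟩
      change (∃ _, _) ∨ (∃ j ≤ s, l j = w (ZMod.val (n := r + s) i))
      have hi := hval i
      rcases le_or_gt (ZMod.val (n := r + s) i) r with h | h
      · exact Or.inl ⟨_, h, (hU _ h).symm⟩
      · exact Or.inr ⟨_, by omega, (hL _ h.le hi.le).symm⟩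
    · have : ∀ n < r + s, w n ∈ Set.range P.vtx := by
        intro n hn
        refine ⟨((n : ℕ) : ZMod (r + s)), ?_⟩
        change w (ZMod.val _) = _
        rw [ZMod.val_natCast, Nat.mod_eq_of_lt hn]
      rintro (⟨i, hi, rfl⟩ | ⟨i, hi, rfl⟩)
      · rw [← hU i hi]; exact this i (by omega)
      · rcases Nat.eq_zero_or_pos i with rfl | hpos
        · rw [← h0, ← hU 0 (by omega)]; exact this 0 (by omega)
        · have e := hL (r + s - i) (by omega) (by omega)
          rw [show r + s - (r + s - i) = i by omega] at e
          rw [← e]; exact this _ (by omega)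
  · intro z
    have hz : z ∈ P.edgeUnion ↔ ∃ n < r + s, z ∈ Seg (w n) (w (n + 1)) := by
      unfold SimplePolygon.edgeUnion
      rw [Set.mem_iUnion]
      constructor
      · rintro ⟨i, hi⟩
        change z ∈ Seg (w (ZMod.val (n := r + s) i)) (w (ZMod.val (n := r + s) (i + 1))) at hi
        exact ⟨_, hval i, (hedge i) ▸ hi⟩
      · rintro ⟨n, hn, hz⟩
        refine ⟨((n : ℕ) : ZMod (r + s)), ?_⟩
        change z ∈ Seg (w (ZMod.val (n := r + s) _)) (w (ZMod.val (n := r + s) _))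
        rw [hedge, ZMod.val_natCast, Nat.mod_eq_of_lt hn]
        exact hz
    rw [hz]
    constructor
    · rintro ⟨n, hn, h⟩
      rcases lt_or_ge n r with hnr | hnr
      · rw [hU _ hnr.le, hU _ hnr] at h
        exact Or.inl ⟨n, hnr, h⟩
      · rw [hL _ hnr hn.le, hL _ (by omega) hn, Seg_symm] at h
        refine Or.inr ⟨r + s - (n + 1), by omega, ?_⟩
        rwa [show r + s - (n + 1) + 1 = r + s - n by omega]
    · rintro (⟨i, hi, h⟩ | ⟨i, hi, h⟩)
      · refine ⟨i, by omega, ?_⟩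
        rwa [hU _ hi.le, hU _ hi]
      · refine ⟨r + s - (i + 1), by omega, ?_⟩
        rw [hL _ (by omega) (by omega), hL _ (by omega) (by omega), Seg_symm]
        rwa [show r + s - (r + s - (i + 1) + 1) = i by omega,
          show r + s - (r + s - (i + 1)) = i + 1 by omega]

lemma exists_enum (U : Finset Pt) (hφ : ∀ p ∈ U, ∀ q ∈ U, φ p = φ q → p = q) :
    U.Nonempty → ∃ (r : ℕ) (u : ℕ → Pt), (∀ i < r, φ (u i) < φ (u (i + 1))) ∧
      ∀ p, p ∈ U ↔ ∃ i ≤ r, u i = p := by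
  classical
  induction U using Finset.induction_on_max_value φ with
  | empty => intro h; exact absurd h (by simp)
  | insert a U ha hmax ih =>
    intro _
    rcases U.eq_empty_or_nonempty with rfl | hne
    · refine ⟨0, fun _ => a, by intro i hi; omega, ?_⟩
      intro p
      simp only [insert_empty_eq, Finset.mem_singleton]
      constructor
      · rintro rfl; exact ⟨0, le_rfl, rfl⟩
      · rintro ⟨_, _, rfl⟩; rfl
    · obtain ⟨r, u, hu, hmem⟩ := ih (fun p hp q hq => hφ p (Finset.mem_insert_of_mem hp) q
        (Finset.mem_insert_of_mem hq)) hne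
      refine ⟨r + 1, fun i => if i ≤ r then u i else a, ?_, ?_⟩
      · intro i hi
        simp only
        rw [if_pos (by omega)]
        split_ifs with h
        · exact hu i (by omega)
        · have hir : u i ∈ U := (hmem _).2 ⟨i, by omega, rfl⟩
          refine lt_of_le_of_ne (hmax _ hir) ?_
          intro he
          apply ha
          rw [← hφ _ (Finset.mem_insert_of_mem hir) _ (Finset.mem_insert_self _ _) he]
          exact hir
      · intro p
        rw [Finset.mem_insert, hmem]
        constructor
        · rintro (rfl | ⟨i, hi, rfl⟩)
          · exact ⟨r + 1, le_rfl, if_neg (by omega)⟩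
          · exact ⟨i, by omega, if_pos hi⟩
        · rintro ⟨i, hi, rfl⟩
          simp only
          split_ifs with h
          · exact Or.inr ⟨i, h, rfl⟩
          · exact Or.inl rfl

lemma exists_bottom (V : Finset Pt) (x : ℝ) (h : ∃ p ∈ V, X p = x) :
    ∃ b ∈ V, X b = x ∧ ∀ q ∈ V, X q = x → φ b ≤ φ q := by
  classical
  obtain ⟨p, hp, hx⟩ := h
  obtain ⟨b, hb, hmin⟩ := (V.filter (fun q => X q = x)).exists_min_image φ
    ⟨p, Finset.mem_filter.2 ⟨hp, hx⟩⟩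
  rw [Finset.mem_filter] at hb
  exact ⟨b, hb.1, hb.2, fun q hq hqx => hmin q (Finset.mem_filter.2 ⟨hq, hqx⟩)⟩

lemma exists_top (V : Finset Pt) (x : ℝ) (h : ∃ p ∈ V, X p = x) :
    ∃ b ∈ V, X b = x ∧ ∀ q ∈ V, X q = x → φ q ≤ φ b := by
  classical
  obtain ⟨p, hp, hx⟩ := h
  obtain ⟨b, hb, hmin⟩ := (V.filter (fun q => X q = x)).exists_max_image φ
    ⟨p, Finset.mem_filter.2 ⟨hp, hx⟩⟩
  rw [Finset.mem_filter] at hb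
  exact ⟨b, hb.1, hb.2, fun q hq hqx => hmin q (Finset.mem_filter.2 ⟨hq, hqx⟩)⟩

/-- The combinatorial core: a finite set all of whose columns (fibres of `X`) have at least two
points and which has at least two columns. -/
lemma columns_polygon (hinj : ∀ p q : Pt, φ p = φ q → X p = X q → p = q) (V : Finset Pt)
    (H1 : ∀ p ∈ V, ∀ q ∈ V, X p < X q → φ p < φ q)
    (H2 : ∀ p ∈ V, ∃ q ∈ V, X q = X p ∧ q ≠ p)
    (H3 : ∃ p ∈ V, ∃ q ∈ V, X p ≠ X q) :
    ∃ P : SimplePolygon, (∀ z, z ∈ Set.range P.vtx ↔ z ∈ V) ∧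
      ∀ p ∈ V, ∀ q ∈ V, X p = X q → Seg p q ⊆ P.closedRegion := by
  classical
  have hφinj : ∀ p ∈ V, ∀ q ∈ V, φ p = φ q → p = q := by
    intro p hp q hq h
    rcases lt_trichotomy (X p) (X q) with h' | h' | h'
    · have := H1 p hp q hq h'; linarith
    · exact hinj p q h h'
    · have := H1 q hq p hp h'; linarith
  have hXle : ∀ p ∈ V, ∀ q ∈ V, φ p ≤ φ q → X p ≤ X q := by
    intro p hp q hq h
    by_contra h'
    have := H1 q hq p hp (not_le.1 h')
    linarith
  obtain ⟨p0, hp0, q0, hq0, hpq0⟩ := H3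
  obtain ⟨m, hmV, hm⟩ := V.exists_min_image φ ⟨p0, hp0⟩
  obtain ⟨M, hMV, hM⟩ := V.exists_max_image φ ⟨p0, hp0⟩
  have hmX : ∀ p ∈ V, X m ≤ X p := fun p hp => hXle m hmV p hp (hm p hp)
  have hMX : ∀ p ∈ V, X p ≤ X M := fun p hp => hXle p hp M hMV (hM p hp)
  have hmM : X m < X M := by
    by_contra h
    apply hpq0
    have a1 := hmX p0 hp0
    have a2 := hmX q0 hq0
    have a3 := hMX p0 hp0
    have a4 := hMX q0 hq0
    linarith
  let bot : Pt → Prop := fun p => ∀ q ∈ V, X q = X p → φ p ≤ φ q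
  set L := V.filter (fun p => bot p ∨ X p = X M) with hLdef
  set U := V.filter (fun p => p = m ∨ p = M ∨ (¬ bot p ∧ X p ≠ X M)) with hUdef
  have hmemL : ∀ p, p ∈ L ↔ p ∈ V ∧ (bot p ∨ X p = X M) := fun p => Finset.mem_filter
  have hmemU : ∀ p, p ∈ U ↔ p ∈ V ∧ (p = m ∨ p = M ∨ (¬ bot p ∧ X p ≠ X M)) :=
    fun p => Finset.mem_filter
  have hbotm : bot m := fun q hq _ => hm q hq
  have hnbotM : ¬ bot M := by
    intro h
    obtain ⟨q, hq, hqX, hqne⟩ := H2 M hMV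
    exact hqne (hφinj q hq M hMV (le_antisymm (hM q hq) (h q hq hqX)))
  have hmL : m ∈ L := (hmemL m).2 ⟨hmV, Or.inl hbotm⟩
  have hML : M ∈ L := (hmemL M).2 ⟨hMV, Or.inr rfl⟩
  have hmU : m ∈ U := (hmemU m).2 ⟨hmV, Or.inl rfl⟩
  have hMU : M ∈ U := (hmemU M).2 ⟨hMV, Or.inr (Or.inl rfl)⟩
  have hUL : ∀ p, p ∈ U → p ∈ L → p = m ∨ p = M := by
    intro p hpU hpL
    rcases ((hmemU p).1 hpU).2 with h | h | h
    · exact Or.inl h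
    · exact Or.inr h
    · rcases ((hmemL p).1 hpL).2 with h' | h'
      · exact absurd h' h.1
      · exact absurd h' h.2
  have hUXM : ∀ p ∈ U, X p = X M → p = M := by
    intro p hpU hpX
    rcases ((hmemU p).1 hpU).2 with h | h | h
    · rw [h] at hpX; linarith
    · exact h
    · exact absurd hpX h.2
  -- every column which is not the last one has its top in `U`
  have htopU : ∀ p ∈ V, X p < X M → ∃ t ∈ U, X t = X p ∧ ∀ q ∈ V, X q = X p → φ q ≤ φ t := by
    intro p hp hpM
    obtain ⟨t, htV, htX, ht⟩ := exists_top φ X V (X p) ⟨p, hp, rfl⟩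
    refine ⟨t, (hmemU t).2 ⟨htV, Or.inr (Or.inr ⟨?_, ?_⟩)⟩, htX, ht⟩
    · intro hb
      obtain ⟨q, hq, hqX, hqne⟩ := H2 t htV
      exact hqne (hφinj q hq t htV (le_antisymm (ht q hq (hqX.trans htX)) (hb q hq hqX)))
    · rw [htX]; exact hpM.ne
  -- every column has its bottom in `L`
  have hbotL : ∀ p ∈ V, ∃ b ∈ L, bot b ∧ X b = X p ∧ ∀ q ∈ V, X q = X p → φ b ≤ φ q := by
    intro p hp
    obtain ⟨b, hbV, hbX, hb⟩ := exists_bottom φ X V (X p) ⟨p, hp, rfl⟩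
    have hbb : bot b := fun q hq hqX => hb q hq (hqX.trans hbX)
    exact ⟨b, (hmemL b).2 ⟨hbV, Or.inl hbb⟩, hbb, hbX, hb⟩
  obtain ⟨r, u, hu, hUe⟩ := exists_enum φ U
    (fun p hp q hq => hφinj p ((hmemU p).1 hp).1 q ((hmemU q).1 hq).1) ⟨m, hmU⟩
  obtain ⟨s, l, hl, hLe⟩ := exists_enum φ L
    (fun p hp q hq => hφinj p ((hmemL p).1 hp).1 q ((hmemL q).1 hq).1) ⟨m, hmL⟩
  have huV : ∀ i ≤ r, u i ∈ V := fun i hi => ((hmemU _).1 ((hUe _).2 ⟨i, hi, rfl⟩)).1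
  have hlV : ∀ i ≤ s, l i ∈ V := fun i hi => ((hmemL _).1 ((hLe _).2 ⟨i, hi, rfl⟩)).1
  have huU : ∀ i ≤ r, u i ∈ U := fun i hi => (hUe _).2 ⟨i, hi, rfl⟩
  have hlL : ∀ i ≤ s, l i ∈ L := fun i hi => (hLe _).2 ⟨i, hi, rfl⟩
  have hu0 : u 0 = m := by
    obtain ⟨i, hi, h⟩ := (hUe m).1 hmU
    have := chain_le φ u r hu 0 i (by omega) hi
    rw [h] at this
    exact hφinj _ (huV 0 (by omega)) _ hmV (le_antisymm this (hm _ (huV 0 (by omega))))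
  have hl0 : l 0 = m := by
    obtain ⟨i, hi, h⟩ := (hLe m).1 hmL
    have := chain_le φ l s hl 0 i (by omega) hi
    rw [h] at this
    exact hφinj _ (hlV 0 (by omega)) _ hmV (le_antisymm this (hm _ (hlV 0 (by omega))))
  have hur : u r = M := by
    obtain ⟨i, hi, h⟩ := (hUe M).1 hMU
    have := chain_le φ u r hu i r hi le_rfl
    rw [h] at this
    exact hφinj _ (huV r le_rfl) _ hMV (le_antisymm (hM _ (huV r le_rfl)) this)
  have hls : l s = M := by
    obtain ⟨i, hi, h⟩ := (hLe M).1 hML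
    have := chain_le φ l s hl i s hi le_rfl
    rw [h] at this
    exact hφinj _ (hlV s le_rfl) _ hMV (le_antisymm (hM _ (hlV s le_rfl)) this)
  have hr : 1 ≤ r := by
    by_contra h
    have : r = 0 := by omega
    subst this
    rw [hu0] at hur
    rw [hur] at hmM
    exact lt_irrefl _ hmM
  have hs : 2 ≤ s := by
    obtain ⟨b, hbL, hbb, hbX, -⟩ := hbotL M hMV
    obtain ⟨i, hi, rfl⟩ := (hLe b).1 hbL
    have hi0 : i ≠ 0 := by
      rintro rfl
      rw [hl0] at hbX
      linarith
    have his : i ≠ s := by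
      rintro rfl
      rw [hls] at hbb
      exact hnbotM hbb
    omega
  -- no points strictly between consecutive ones
  have hUgap : ∀ i < r, ∀ p ∈ U, φ p ≤ φ (u i) ∨ φ (u (i + 1)) ≤ φ p := by
    intro i hi p hp
    obtain ⟨j, hj, rfl⟩ := (hUe p).1 hp
    rcases le_or_gt j i with h | h
    · exact Or.inl (chain_le φ u r hu j i h (by omega))
    · exact Or.inr (chain_le φ u r hu (i + 1) j h hj)
  have hLgap : ∀ i < s, ∀ p ∈ L, φ p ≤ φ (l i) ∨ φ (l (i + 1)) ≤ φ p := by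
    intro i hi p hp
    obtain ⟨j, hj, rfl⟩ := (hLe p).1 hp
    rcases le_or_gt j i with h | h
    · exact Or.inl (chain_le φ l s hl j i h (by omega))
    · exact Or.inr (chain_le φ l s hl (i + 1) j h hj)
  have huX : ∀ i < r, X (u i) ≤ X (u (i + 1)) := fun i hi =>
    hXle _ (huV i hi.le) _ (huV (i + 1) hi) (hu i hi).le
  have hlX : ∀ i < s, X (l i) ≤ X (l (i + 1)) := fun i hi =>
    hXle _ (hlV i hi.le) _ (hlV (i + 1) hi) (hl i hi).le
  -- consecutive points lie in the same or in consecutive columns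
  have hUcol : ∀ i < r, ∀ p ∈ V, X p ≤ X (u i) ∨ X (u (i + 1)) ≤ X p := by
    intro i hi p hp
    by_contra hcon
    push Not at hcon
    have hpM : X p < X M := hcon.2.trans_le (hMX _ (huV (i + 1) hi))
    obtain ⟨t, htU, htX, -⟩ := htopU p hp hpM
    have htV := ((hmemU t).1 htU).1
    have a1 := H1 _ (huV i hi.le) t htV (by rw [htX]; exact hcon.1)
    have a2 := H1 t htV _ (huV (i + 1) hi) (by rw [htX]; exact hcon.2)
    rcases hUgap i hi t htU with h | h <;> linarith
  have hLcol : ∀ i < s, ∀ p ∈ V, X p ≤ X (l i) ∨ X (l (i + 1)) ≤ X p := by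
    intro i hi p hp
    by_contra hcon
    push Not at hcon
    obtain ⟨t, htL, -, htX, -⟩ := hbotL p hp
    have htV := ((hmemL t).1 htL).1
    have a1 := H1 _ (hlV i hi.le) t htV (by rw [htX]; exact hcon.1)
    have a2 := H1 t htV _ (hlV (i + 1) hi) (by rw [htX]; exact hcon.2)
    rcases hLgap i hi t htL with h | h <;> linarith
  have hLleft : ∀ i < s, X (l i) < X (l (i + 1)) → bot (l i) := by
    intro i hi h
    rcases ((hmemL _).1 (hlL i hi.le)).2 with h' | h'
    · exact h'
    · have := hMX _ (hlV (i + 1) hi); linarith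
  have hLright : ∀ i < s, X (l i) < X (l (i + 1)) → bot (l (i + 1)) := by
    intro i hi h
    obtain ⟨b, hbL, hbb, hbX, hb⟩ := hbotL _ (hlV (i + 1) hi)
    have hbV := ((hmemL b).1 hbL).1
    have a1 := H1 _ (hlV i hi.le) b hbV (by rw [hbX]; exact h)
    rcases hLgap i hi b hbL with h' | h'
    · linarith
    · have : b = l (i + 1) :=
        hφinj _ hbV _ (hlV (i + 1) hi) (le_antisymm (hb _ (hlV (i + 1) hi) rfl) h')
      exact this ▸ hbb
  have hLvert : ∀ i < s, X (l i) = X (l (i + 1)) → X (l (i + 1)) = X M := by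
    intro i hi h
    rcases ((hmemL _).1 (hlL (i + 1) hi)).2 with h' | h'
    · have := h' _ (hlV i hi.le) h
      have := hl i hi
      linarith
    · exact h'
  have hUnotbot : ∀ i < r, ¬ bot (u (i + 1)) := by
    intro i hi hb
    rcases ((hmemU _).1 (huU (i + 1) hi)).2 with h | h | h
    · have a1 := hu i hi
      rw [h] at a1
      have := hm _ (huV i hi.le)
      linarith
    · rw [h] at hb; exact hnbotM hb
    · exact h.1 hb
  have hbotU : ∀ p ∈ U, bot p → p = m ∨ p = M := fun p hp hb =>
    hUL p hp ((hmemL p).2 ⟨((hmemU p).1 hp).1, Or.inl hb⟩)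
  have hd : ∀ i < r, ∀ j < s, ∀ z, z ∈ Seg (u i) (u (i + 1)) → z ∈ Seg (l j) (l (j + 1)) →
      z = u 0 ∨ z = u r := by
    intro i hi j hj z hz hz'
    rw [hu0, hur]
    have ha := huU i hi.le
    have hb := huU (i + 1) hi
    have haV := huV i hi.le
    have hbV := huV (i + 1) hi
    have hcV := hlV j hj.le
    have hdV := hlV (j + 1) hj
    have zX := seg_le X (huX i hi) hz
    have zX' := seg_le X (hlX j hj) hz'
    have zφ := seg_le φ (hu i hi).le hz
    rcases (hlX j hj).eq_or_lt with hcd | hcd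
    · -- vertical lower edge, in the last column
      have hM' := hLvert j hj hcd
      have hbM : X (u (i + 1)) = X M := le_antisymm (hMX _ hbV) (by linarith)
      have hbe := hUXM _ hb hbM
      have hab : X (u i) < X (u (i + 1)) := by
        refine lt_of_le_of_ne (huX i hi) ?_
        intro h
        have := hUXM _ ha (h.trans hbM)
        have h2 := hu i hi
        rw [this, hbe] at h2
        exact lt_irrefl _ h2
      right
      rw [← hbe]
      exact seg_eq_right X hab hz (by linarith)
    · have hcb := hLleft j hj hcd
      have hdb := hLright j hj hcd
      rcases (huX i hi).eq_or_lt with hab | hab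
      · -- vertical upper edge
        rcases hLcol j hj _ haV with h | h
        · have hzc : z = l j := seg_eq_left X hcd hz' (by linarith)
          have hXa : X (l j) = X (u i) := by rw [← hzc]; linarith
          have h1 := hcb _ haV hXa.symm
          rw [hzc] at zφ
          have : l j = u i := hφinj _ hcV _ haV (le_antisymm h1 zφ.1)
          rw [hzc, this]
          exact hbotU _ ha (this ▸ hcb)
        · have hzc : z = l (j + 1) := seg_eq_right X hcd hz' (by linarith)
          have hXa : X (l (j + 1)) = X (u i) := by rw [← hzc]; linarith
          have h1 := hdb _ haV hXa.symm
          rw [hzc] at zφ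
          have : l (j + 1) = u i := hφinj _ hdV _ haV (le_antisymm h1 zφ.1)
          rw [hzc, this]
          exact hbotU _ ha (this ▸ hdb)
      · by_cases hbc : X (u (i + 1)) ≤ X (l j)
        · have e1 : z = u (i + 1) := seg_eq_right X hab hz (by linarith)
          have e2 : z = l j := seg_eq_left X hcd hz' (by linarith)
          rw [e1]
          exact hbotU _ hb (e1 ▸ e2 ▸ hcb)
        by_cases hda : X (l (j + 1)) ≤ X (u i)
        · have e1 : z = u i := seg_eq_left X hab hz (by linarith)
          have e2 : z = l (j + 1) := seg_eq_right X hcd hz' (by linarith)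
          rw [e1]
          exact hbotU _ ha (e1 ▸ e2 ▸ hdb)
        have hac : X (u i) = X (l j) := by
          apply le_antisymm
          · exact (hLcol j hj _ haV).resolve_right hda
          · exact (hUcol i hi _ hcV).resolve_right hbc
        have hbd : X (u (i + 1)) = X (l (j + 1)) := by
          apply le_antisymm
          · exact (hUcol i hi _ hdV).resolve_left hda
          · exact (hLcol j hj _ hbV).resolve_left hbc
        have f1 : φ (l j) ≤ φ (u i) := hcb _ haV hac
        have f2 : φ (l (j + 1)) < φ (u (i + 1)) := by
          refine lt_of_le_of_ne (hdb _ hbV hbd) ?_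
          intro h
          have := hφinj _ hdV _ hbV h
          exact hUnotbot i hi (this ▸ hdb)
        obtain ⟨t, t0, t1, te, tf⟩ := seg_coord hz
        obtain ⟨t', t0', t1', te', tf'⟩ := seg_coord hz'
        have g1 := tf X
        have g2 := tf' X
        have g3 := tf φ
        have g4 := tf' φ
        have htt : t = t' := by
          rw [← hac, ← hbd] at g2
          have : (t - t') * (X (u (i + 1)) - X (u i)) = 0 := by linarith
          rcases mul_eq_zero.1 this with h | h <;> linarith
        subst htt
        have ht0 : t = 0 := by
          by_contra hne
          have htp : 0 < t := lt_of_le_of_ne t0 (Ne.symm hne)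
          nlinarith [mul_nonneg (sub_nonneg.2 t1) (sub_nonneg.2 f1), mul_pos htp (sub_pos.2 f2)]
        subst ht0
        simp only [zero_smul, add_zero] at te te'
        rw [te]
        exact hbotU _ ha (te ▸ te' ▸ hcb)
  obtain ⟨P, hPv, hPe⟩ := exists_poly φ u l r s hr hs hu hl (hu0.trans hl0.symm)
    (hur.trans hls.symm) hd
  refine ⟨P, ?_, ?_⟩
  · intro z
    rw [hPv, ← hUe, ← hLe, hmemU, hmemL]
    constructor
    · rintro (h | h) <;> exact h.1
    · intro h
      by_cases h1 : bot z ∨ X z = X M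
      · exact Or.inr ⟨h, h1⟩
      · push Not at h1
        exact Or.inl ⟨h, Or.inr (Or.inr h1)⟩
  · have main : ∀ p ∈ V, ∀ q ∈ V, X p = X q → φ p ≤ φ q → Seg p q ⊆ P.closedRegion := by
      intro p hp q hq hpq hle z hz
      by_cases hzE : z ∈ P.edgeUnion
      · exact Or.inl hzE
      refine Or.inr ⟨hzE, ?_⟩
      have zX : X z = X p := by
        have := seg_le X hpq.le hz
        linarith
      have zφ := seg_le φ hle hz
      have zlow : ∀ c ∈ V, X c < X z → φ c < φ z := by
        intro c hc h
        exact (H1 c hc p hp (zX ▸ h)).trans_le zφ.1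
      have zhigh : ∀ c ∈ V, X z < X c → φ z < φ c := by
        intro c hc h
        exact zφ.2.trans_lt (H1 q hq c hc (by linarith))
      refine region φ X hinj u l r s hr (by omega) hu hl (hu0.trans hl0.symm)
        (hur.trans hls.symm) P.edgeUnion hPe z ?_ ?_ ?_ ?_ hzE
      · rw [hu0]; exact (hm p hp).trans zφ.1
      · rw [hur]; exact zφ.2.trans (hM q hq)
      · intro i hi w hw hwz
        have wφ := seg_le φ (hu i hi).le hw
        have wX := seg_le X (huX i hi) hw
        have haV := huV i hi.le
        have hbV := huV (i + 1) hi
        by_contra hcon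
        push Not at hcon
        have hzb : X z < X (u (i + 1)) := by linarith
        have haz : X (u i) ≤ X z := by
          by_contra h
          have := zhigh _ haV (not_le.1 h)
          linarith
        have haz' : X (u i) = X z := by
          rcases hUcol i hi p hp with h | h <;> linarith
        obtain ⟨t, htU, htX, ht⟩ := htopU _ haV (by linarith [hMX _ hbV])
        have htV := ((hmemU t).1 htU).1
        have b1 := H1 t htV _ hbV (by linarith)
        have hta : φ t ≤ φ (u i) := by
          rcases hUgap i hi t htU with h | h
          · exact h
          · linarith
        have b2 := ht q hq (by linarith)
        have hwa : w = u i := seg_eq_left φ (hu i hi) hw (by linarith)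
        rw [hwa] at hcon
        linarith
      · intro i hi w hw hwz
        have wφ := seg_le φ (hl i hi).le hw
        have wX := seg_le X (hlX i hi) hw
        have haV := hlV i hi.le
        have hbV := hlV (i + 1) hi
        by_contra hcon
        push Not at hcon
        have haz : X (l i) < X z := by linarith
        have hzb : X z ≤ X (l (i + 1)) := by
          by_contra h
          have := zlow _ hbV (not_le.1 h)
          linarith
        have hbz' : X (l (i + 1)) = X z := by
          rcases hLcol i hi p hp with h | h <;> linarith
        have hb := hLright i hi (by linarith)
        have b2 := hb p hp (by linarith)
        have hwa : w = l (i + 1) := seg_eq_right φ (hl i hi) hw (by linarith)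
        rw [hwa] at hcon
        linarith
    intro p hp q hq hpq
    rcases le_total (φ p) (φ q) with h | h
    · exact main p hp q hq hpq h
    · rw [Seg_symm]; exact main q hq p hp hpq.symm h

end helpers

/-- A family of at least two pairwise disjoint parallel segments whose
endpoints are not all collinear admits a circumscribing polygon. -/
theorem parallel_circumscribing (S : Finset (Pt × Pt)) (hcard : 2 ≤ S.card)
    (hdisj : DisjointFamily S)
    (hpar : ∃ v : Pt, v ≠ 0 ∧ ∀ s ∈ S, ∃ c : ℝ, s.2 - s.1 = c • v)
    (hnc : ¬ Collinear ℝ (SegEndpoints S)) :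
    ∃ P : SimplePolygon, IsCircumscribing S P := by
  classical
  obtain ⟨v, hv, hpar⟩ := hpar
  let X : Pt →ₗ[ℝ] ℝ := v.2 • LinearMap.fst ℝ ℝ ℝ - v.1 • LinearMap.snd ℝ ℝ ℝ
  let Y : Pt →ₗ[ℝ] ℝ := v.1 • LinearMap.fst ℝ ℝ ℝ + v.2 • LinearMap.snd ℝ ℝ ℝ
  have hX : ∀ p, X p = v.2 * p.1 - v.1 * p.2 := fun p => rfl
  have hY : ∀ p, Y p = v.1 * p.1 + v.2 * p.2 := fun p => rfl
  have hvv : 0 < v.1 ^ 2 + v.2 ^ 2 := by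
    by_contra h
    apply hv
    have h1 : v.1 = 0 := by nlinarith [sq_nonneg v.1, sq_nonneg v.2]
    have h2 : v.2 = 0 := by nlinarith [sq_nonneg v.1, sq_nonneg v.2]
    exact Prod.ext h1 h2
  have hXY : ∀ p q : Pt, X p = X q → Y p = Y q → p = q := by
    intro p q h1 h2
    rw [hX, hX] at h1
    rw [hY, hY] at h2
    apply Prod.ext
    · apply mul_left_cancel₀ hvv.ne'
      linear_combination v.2 * h1 + v.1 * h2
    · apply mul_left_cancel₀ hvv.ne'
      linear_combination (-v.1) * h1 + v.2 * h2
  let V : Finset Pt := S.image Prod.fst ∪ S.image Prod.snd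
  have hV : ∀ p, p ∈ V ↔ ∃ s ∈ S, p = s.1 ∨ p = s.2 := by
    intro p
    simp only [V, Finset.mem_union, Finset.mem_image]
    constructor
    · rintro (⟨s, hs, rfl⟩ | ⟨s, hs, rfl⟩)
      · exact ⟨s, hs, Or.inl rfl⟩
      · exact ⟨s, hs, Or.inr rfl⟩
    · rintro ⟨s, hs, rfl | rfl⟩
      · exact Or.inl ⟨s, hs, rfl⟩
      · exact Or.inr ⟨s, hs, rfl⟩
  have hVS : ∀ p, p ∈ SegEndpoints S ↔ p ∈ V := by
    intro p
    rw [hV]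
    simp [SegEndpoints]
  have hXs : ∀ s ∈ S, X s.1 = X s.2 := by
    intro s hs
    obtain ⟨c, hc⟩ := hpar s hs
    have : X (s.2 - s.1) = 0 := by
      rw [hc, hX]
      simp only [Prod.smul_fst, Prod.smul_snd, smul_eq_mul]
      ring
    rw [map_sub] at this
    linarith
  obtain ⟨ε, hε0, hε⟩ : ∃ ε : ℝ, 0 < ε ∧
      ∀ p ∈ V, ∀ q ∈ V, X p < X q → X p + ε * Y p < X q + ε * Y q := by
    have hev : ∀ᶠ ε : ℝ in nhdsWithin 0 (Set.Ioi 0),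
        ∀ p ∈ V, ∀ q ∈ V, X p < X q → X p + ε * Y p < X q + ε * Y q := by
      rw [Filter.eventually_all_finset]
      intro p _
      rw [Filter.eventually_all_finset]
      intro q _
      by_cases h : X p < X q
      · have hc : ContinuousAt (fun ε : ℝ => (X q + ε * Y q) - (X p + ε * Y p)) 0 := by fun_prop
        have : ∀ᶠ ε : ℝ in nhds 0, 0 < (X q + ε * Y q) - (X p + ε * Y p) := by
          apply hc.eventually_const_lt
          simpa using h
        filter_upwards [nhdsWithin_le_nhds this] with ε hε _
        linarith
      · exact Filter.Eventually.of_forall fun _ h' => absurd h' h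
    obtain ⟨ε, h1, h2⟩ := (hev.and self_mem_nhdsWithin).exists
    exact ⟨ε, h2, h1⟩
  let φ : Pt →ₗ[ℝ] ℝ := X + ε • Y
  have hφ : ∀ p, φ p = X p + ε * Y p := fun p => rfl
  have hinj : ∀ p q : Pt, φ p = φ q → X p = X q → p = q := by
    intro p q h1 h2
    rw [hφ, hφ, h2] at h1
    exact hXY p q h2 (mul_left_cancel₀ hε0.ne' (by linarith))
  obtain ⟨P, hP1, hP2⟩ := columns_polygon φ X hinj V
    (by intro p hp q hq h; rw [hφ, hφ]; exact hε p hp q hq h)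
    (by
      intro p hp
      obtain ⟨s, hs, rfl | rfl⟩ := (hV p).1 hp
      · exact ⟨s.2, (hV _).2 ⟨s, hs, Or.inr rfl⟩, (hXs s hs).symm, (hdisj.1 s hs).symm⟩
      · exact ⟨s.1, (hV _).2 ⟨s, hs, Or.inl rfl⟩, hXs s hs, hdisj.1 s hs⟩)
    (by
      by_contra hcon
      push Not at hcon
      apply hnc
      obtain ⟨s, hs⟩ : S.Nonempty := Finset.card_pos.1 (by omega)
      have hs1 : s.1 ∈ V := (hV _).2 ⟨s, hs, Or.inl rfl⟩
      rw [collinear_iff_of_mem ((hVS _).2 hs1)]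
      refine ⟨v, fun p hp => ⟨(Y p - Y s.1) / (v.1 ^ 2 + v.2 ^ 2), ?_⟩⟩
      have hx := hcon p ((hVS p).1 hp) _ hs1
      apply hXY
      · simp only [vadd_eq_add, map_add, map_smul, hx, smul_eq_mul]
        have : X v = 0 := by rw [hX]; ring
        rw [this]; ring
      · simp only [vadd_eq_add, map_add, map_smul, smul_eq_mul]
        have : Y v = v.1 ^ 2 + v.2 ^ 2 := by rw [hY]; ring
        rw [this]
        field_simp
        ring)
  refine ⟨P, ?_, ?_⟩
  · ext z
    rw [hP1, hVS]
  · intro s hs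
    exact hP2 _ ((hV _).2 ⟨s, hs, Or.inl rfl⟩) _ ((hV _).2 ⟨s, hs, Or.inr rfl⟩) (hXs s hs)
end
end

section
/- Let P = (p_0, …, p_{k−1}) be a simple polygon in ℝ² whose vertex set V contains no three collinear points. Then the vertices of P that are extreme points of conv(V) occur along P in the same cyclic order as along the boundary of conv(V); that is, there is a choice of orientation of the cyclic sequence of P such that restricting it to the extreme points of conv(V) yields the counterclockwise cyclic order of the extreme points around conv(V). -/
noncomputable section

/-- The planar cross product (signed area determinant). -/
def cross2 (u v : Pt) : ℝ := u.1 * v.2 - u.2 * v.1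


/-- Complex number attached to a point. -/
def toC (u : Pt) : ℂ := ⟨u.1, u.2⟩

/-- Signed angle from `u` to `v`. -/
def ang (u v : Pt) : ℝ := Complex.arg (toC v * (starRingEnd ℂ) (toC u))

lemma ang_im (u v : Pt) : (toC v * (starRingEnd ℂ) (toC u)).im = cross2 u v := by
  simp [toC, cross2]; ring

lemma ang_pos {u v : Pt} (h : 0 < cross2 u v) : 0 < ang u v := by
  have him := ang_im u v
  rcases lt_trichotomy (ang u v) 0 with h1 | h1 | h1
  · have := Complex.arg_neg_iff.1 h1
    linarith
  · have := (Complex.arg_eq_zero_iff.1 h1).2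
    linarith
  · exact h1

lemma ang_neg {u v : Pt} (h : cross2 u v < 0) : ang u v < 0 := by
  have him := ang_im u v
  exact Complex.arg_neg_iff.2 (by linarith)

lemma arg_mul_conj {x y : ℂ} (hx : 0 < x.re) (hy : 0 < y.re) :
    Complex.arg (x * (starRingEnd ℂ) y) = x.arg - y.arg := by
  have hx' := Complex.abs_arg_lt_pi_div_two_iff.2 (Or.inl hx)
  have hy' := Complex.abs_arg_lt_pi_div_two_iff.2 (Or.inl hy)
  have hx0 : x ≠ 0 := by rintro rfl; simp at hx
  have hy0 : y ≠ 0 := by rintro rfl; simp at hy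
  rw [abs_lt] at hx' hy'
  have hc : ((starRingEnd ℂ) y).arg = - y.arg := by
    rw [Complex.arg_conj, if_neg]
    linarith [Real.pi_pos]
  rw [Complex.arg_mul hx0 (by simpa using hy0), hc]
  · ring
  · rw [hc]; constructor <;> linarith

/-- In a half-plane the angle is a difference of potentials. -/
lemma ang_potential (α β : ℝ) : ∃ g : Pt → ℝ, ∀ u v : Pt, 0 < α * u.1 + β * u.2 →
    0 < α * v.1 + β * v.2 → ang u v = g v - g u := by
  refine ⟨fun u => Complex.arg (⟨α, -β⟩ * toC u), fun u v hu hv => ?_⟩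
  have key := arg_mul_conj (x := ⟨α, -β⟩ * toC v) (y := ⟨α, -β⟩ * toC u)
    (by simpa [toC] using hv) (by simpa [toC] using hu)
  simp only
  rw [← key, ang]
  have hne : 0 < α ^ 2 + β ^ 2 := by
    by_contra hcon
    have h1 : α = 0 := by nlinarith [sq_nonneg α, sq_nonneg β]
    have h2 : β = 0 := by nlinarith [sq_nonneg α, sq_nonneg β]
    simp [h1, h2] at hu
  rw [← Complex.arg_real_mul _ hne]
  congr 1
  apply Complex.ext <;> simp [toC, pow_two] <;> ring

lemma clm_form (f : Pt →L[ℝ] ℝ) (u : Pt) : f u = f (1, 0) * u.1 + f (0, 1) * u.2 := by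
  have : u = u.1 • ((1, 0) : Pt) + u.2 • ((0, 1) : Pt) := by ext <;> simp
  conv_lhs => rw [this]
  simp only [map_add, map_smul, smul_eq_mul]; ring

lemma ang_potential' (f : Pt →L[ℝ] ℝ) : ∃ g : Pt → ℝ, ∀ u v : Pt, 0 < f u → 0 < f v →
    ang u v = g v - g u := by
  obtain ⟨g, hg⟩ := ang_potential (f (1, 0)) (f (0, 1))
  exact ⟨g, fun u v hu hv => hg u v (by rwa [← clm_form]) (by rwa [← clm_form])⟩

lemma ang_telescope (f : Pt →L[ℝ] ℝ) (x : ℕ → Pt) (n : ℕ) (h : ∀ t ≤ n, 0 < f (x t)) :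
    ∑ t ∈ Finset.range n, ang (x t) (x (t + 1)) = ang (x 0) (x n) := by
  obtain ⟨g, hg⟩ := ang_potential' f
  rw [hg _ _ (h 0 (by omega)) (h n le_rfl), ← Finset.sum_range_sub (fun t => g (x t))]
  refine Finset.sum_congr rfl fun t ht => ?_
  rw [Finset.mem_range] at ht
  exact hg _ _ (h t (by omega)) (h (t + 1) (by omega))

lemma ang_cell {p p' q q' : Pt} (h : Disjoint (Seg p p') (Seg q q')) :
    ang (p - q) (p' - q) + ang (p' - q) (p' - q') = ang (p - q) (p - q') + ang (p - q') (p' - q') := by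
  have hc : ∀ a b : Pt, IsCompact (Seg a b) := fun a b => by
    unfold Seg
    rw [← convexHull_pair]
    exact Set.Finite.isCompact_convexHull ℝ (Set.toFinite _)
  obtain ⟨f, u, v, h1, h2, h3⟩ := geometric_hahn_banach_compact_closed
    (convex_segment (𝕜 := ℝ) q q') (hc q q') (convex_segment (𝕜 := ℝ) p p') (hc p p').isClosed h.symm
  obtain ⟨g, hg⟩ := ang_potential' f
  have e1 := h1 q (left_mem_segment ℝ _ _)
  have e2 := h1 q' (right_mem_segment ℝ _ _)
  have e3 := h3 p (left_mem_segment ℝ _ _)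
  have e4 := h3 p' (right_mem_segment ℝ _ _)
  have f1 : 0 < f (p - q) := by rw [map_sub]; linarith
  have f2 : 0 < f (p' - q) := by rw [map_sub]; linarith
  have f3 : 0 < f (p - q') := by rw [map_sub]; linarith
  have f4 : 0 < f (p' - q') := by rw [map_sub]; linarith
  rw [hg _ _ f1 f2, hg _ _ f2 f4, hg _ _ f1 f3, hg _ _ f3 f4]
  ring

lemma grid_sum (H W : ℕ → ℕ → ℝ) (m n : ℕ)
    (h : ∀ s < m, ∀ t < n, H s t + W (s + 1) t = W s t + H s (t + 1)) :
    ∑ s ∈ Finset.range m, H s 0 + ∑ t ∈ Finset.range n, W m t =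
      ∑ t ∈ Finset.range n, W 0 t + ∑ s ∈ Finset.range m, H s n := by
  have row : ∀ s < m, ∀ n' ≤ n, H s 0 + ∑ t ∈ Finset.range n', W (s + 1) t =
      ∑ t ∈ Finset.range n', W s t + H s n' := by
    intro s hs n'
    induction n' with
    | zero => intro _; simp
    | succ k ih =>
      intro hk
      rw [Finset.sum_range_succ, Finset.sum_range_succ]
      linarith [ih (by omega), h s hs k (by omega)]
  have col : ∀ m' ≤ m, ∑ s ∈ Finset.range m', H s 0 + ∑ t ∈ Finset.range n, W m' t =
      ∑ t ∈ Finset.range n, W 0 t + ∑ s ∈ Finset.range m', H s n := by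
    intro m'
    induction m' with
    | zero => intro _; simp
    | succ k ih =>
      intro hk
      rw [Finset.sum_range_succ, Finset.sum_range_succ]
      linarith [ih (by omega), row k (by omega) n le_rfl]
  exact col m le_rfl

/-- Two disjoint polygonal paths: total turning along the grid boundary vanishes. -/
lemma paths_ang (p q : ℕ → Pt) (m n : ℕ)
    (hd : ∀ s < m, ∀ t < n, Disjoint (Seg (p s) (p (s + 1))) (Seg (q t) (q (t + 1))))
    (ha : ∃ f : Pt →L[ℝ] ℝ, ∀ t ≤ n, f (q t) < f (p 0))
    (hb : ∃ f : Pt →L[ℝ] ℝ, ∀ t ≤ n, f (q t) < f (p m))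
    (hc : ∃ f : Pt →L[ℝ] ℝ, ∀ s ≤ m, f (p s) < f (q 0))
    (hd' : ∃ f : Pt →L[ℝ] ℝ, ∀ s ≤ m, f (p s) < f (q n)) :
    ang (p 0 - q 0) (p m - q 0) + ang (p m - q 0) (p m - q n) =
      ang (p 0 - q 0) (p 0 - q n) + ang (p 0 - q n) (p m - q n) := by
  have G := grid_sum (fun s t => ang (p s - q t) (p (s + 1) - q t))
    (fun s t => ang (p s - q t) (p s - q (t + 1))) m n
    (fun s hs t ht => ang_cell (hd s hs t ht))
  obtain ⟨fa, ha⟩ := ha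
  obtain ⟨fb, hb⟩ := hb
  obtain ⟨fc, hc⟩ := hc
  obtain ⟨fd, hd'⟩ := hd'

  rw [ang_telescope (-fc) (fun s => p s - q 0) m
      (fun s hs => by simpa using hc s hs),
    ang_telescope fb (fun t => p m - q t) n
      (fun t ht => by simpa using hb t ht),
    ang_telescope fa (fun t => p 0 - q t) n
      (fun t ht => by simpa using ha t ht),
    ang_telescope (-fd) (fun s => p s - q n) m
      (fun s hs => by simpa using hd' s hs)] at G
  exact G

/-- Orientation of a triple. -/
def ori (a b c : Pt) : ℝ := cross2 (b - a) (c - a)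

lemma paths_false (p q : ℕ → Pt) (m n : ℕ)
    (hd : ∀ s < m, ∀ t < n, Disjoint (Seg (p s) (p (s + 1))) (Seg (q t) (q (t + 1))))
    (ha : ∃ f : Pt →L[ℝ] ℝ, ∀ t ≤ n, f (q t) < f (p 0))
    (hb : ∃ f : Pt →L[ℝ] ℝ, ∀ t ≤ n, f (q t) < f (p m))
    (hc : ∃ f : Pt →L[ℝ] ℝ, ∀ s ≤ m, f (p s) < f (q 0))
    (hd' : ∃ f : Pt →L[ℝ] ℝ, ∀ s ≤ m, f (p s) < f (q n))
    (hs : (0 < ori (p 0) (q 0) (q n) ∧ 0 < ori (p 0) (p m) (q n) ∧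
        ori (p m) (q 0) (q n) < 0 ∧ ori (p 0) (p m) (q 0) < 0) ∨
      (ori (p 0) (q 0) (q n) < 0 ∧ ori (p 0) (p m) (q n) < 0 ∧
        0 < ori (p m) (q 0) (q n) ∧ 0 < ori (p 0) (p m) (q 0))) : False := by
  have G := paths_ang p q m n hd ha hb hc hd'
  generalize p 0 = a at *
  generalize p m = b at *
  generalize q 0 = c at *
  generalize q n = d at *
  have e1 : cross2 (a - c) (b - c) = ori a b c := by simp [ori, cross2]; ring
  have e2 : cross2 (b - c) (b - d) = ori b c d := by simp [ori, cross2]; ring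
  have e3 : cross2 (a - c) (a - d) = ori a c d := by simp [ori, cross2]; ring
  have e4 : cross2 (a - d) (b - d) = ori a b d := by simp [ori, cross2]; ring
  rcases hs with ⟨h1, h2, h3, h4⟩ | ⟨h1, h2, h3, h4⟩
  · have := ang_neg (e1 ▸ h4)
    have := ang_neg (e2 ▸ h3)
    have := ang_pos (e3 ▸ h1)
    have := ang_pos (e4 ▸ h2)
    linarith
  · have := ang_pos (e1 ▸ h4)
    have := ang_pos (e2 ▸ h3)
    have := ang_neg (e3 ▸ h1)
    have := ang_neg (e4 ▸ h2)
    linarith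

lemma extreme_functional {V : Set Pt} (hV : V.Finite) {a : Pt}
    (ha : a ∈ Set.extremePoints ℝ (convexHull ℝ V)) :
    ∃ f : Pt →L[ℝ] ℝ, ∀ v ∈ V, v ≠ a → f v < f a := by
  have h1 := ((convex_convexHull ℝ V).mem_extremePoints_iff_convex_sdiff.1 ha).2
  have h2 : a ∉ convexHull ℝ (V \ {a}) := fun h =>
    (convexHull_min (Set.sdiff_subset_sdiff_left (subset_convexHull ℝ V)) h1 h).2 rfl
  obtain ⟨f, u, hf1, hf2⟩ := geometric_hahn_banach_closed_point
    (convex_convexHull ℝ (V \ {a})) (Set.Finite.isCompact_convexHull ℝ (hV.subset Set.sdiff_subset)).isClosed h2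
  exact ⟨f, fun v hv hne => (hf1 v (subset_convexHull ℝ _ ⟨hv, hne⟩)).trans hf2⟩

lemma ori_ne_zero {p q r : Pt} (hpq : p ≠ q) (h : ¬ Collinear ℝ ({p, q, r} : Set Pt)) :
    ori p q r ≠ 0 := by
  intro h0
  apply h
  rw [collinear_iff_of_mem (p₀ := p) (by simp)]
  refine ⟨q - p, fun x hx => ?_⟩
  simp only [Set.mem_insert_iff, Set.mem_singleton_iff] at hx
  rcases hx with rfl | rfl | rfl
  · exact ⟨0, by simp⟩
  · exact ⟨1, by simp⟩
  · simp only [ori, cross2, Prod.fst_sub, Prod.snd_sub] at h0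
    by_cases h1 : q.1 - p.1 = 0
    · have h2 : q.2 - p.2 ≠ 0 := fun h2 => hpq (Prod.ext (by linarith) (by linarith))
      refine ⟨(x.2 - p.2) / (q.2 - p.2), ?_⟩
      ext
      · simp [h1]
        have : (q.2 - p.2) * (x.1 - p.1) = 0 := by rw [h1] at h0; linarith
        rcases mul_eq_zero.1 this with h | h
        · exact absurd h h2
        · linarith
      · simp; field_simp; ring
    · refine ⟨(x.1 - p.1) / (q.1 - p.1), ?_⟩
      ext
      · simp; field_simp; ring
      · simp; field_simp; linarith

lemma ori_rel (f : Pt →L[ℝ] ℝ) (a b c d : Pt) :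
    ori b c d * f a - ori a c d * f b + ori a b d * f c - ori a b c * f d = 0 := by
  rw [clm_form f a, clm_form f b, clm_form f c, clm_form f d]
  simp only [ori, cross2, Prod.fst_sub, Prod.snd_sub]; ring

lemma ori_sum (a b c d : Pt) :
    ori b c d - ori a c d + ori a b d - ori a b c = 0 := by
  simp only [ori, cross2, Prod.fst_sub, Prod.snd_sub]; ring

/-- If the coefficients sum to zero and three have the same sign, contradiction. -/
lemma coef_false {A B C D x y z w : ℝ} (h0 : A + B + C + D = 0)
    (h1 : A * x + B * y + C * z + D * w = 0) (hy : y < x) (hz : z < x) (hw : w < x)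
    (hs : (0 < B ∧ 0 < C ∧ 0 < D) ∨ (B < 0 ∧ C < 0 ∧ D < 0)) : False := by
  have : B * (x - y) + C * (x - z) + D * (x - w) = 0 := by
    linear_combination x * h0 - h1
  rcases hs with ⟨a, b, c⟩ | ⟨a, b, c⟩
  · have := mul_pos a (sub_pos.2 hy)
    have := mul_pos b (sub_pos.2 hz)
    have := mul_pos c (sub_pos.2 hw)
    linarith
  · have := mul_neg_of_neg_of_pos a (sub_pos.2 hy)
    have := mul_neg_of_neg_of_pos b (sub_pos.2 hz)
    have := mul_neg_of_neg_of_pos c (sub_pos.2 hw)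
    linarith

lemma edges_disjoint (P : SimplePolygon) (e f : ℕ) (h1 : f + 1 < e) (h2 : e + 1 < f + P.k) :
    Disjoint (Seg (P.vtx (e : ℕ)) (P.vtx ((e + 1 : ℕ))))
      (Seg (P.vtx (f : ℕ)) (P.vtx ((f + 1 : ℕ)))) := by
  have key : ∀ x y : ℕ, x < y → y < x + P.k → (x : ZMod P.k) ≠ (y : ZMod P.k) := by
    intro x y hxy hy h
    rw [ZMod.natCast_eq_natCast_iff] at h
    have := (Nat.modEq_iff_dvd' hxy.le).1 h
    have := Nat.le_of_dvd (by omega) this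
    omega
  rw [Set.disjoint_iff_inter_eq_empty, ← Set.not_nonempty_iff_eq_empty]
  have hne : (e : ZMod P.k) ≠ (f : ZMod P.k) := (key f e (by omega) (by omega)).symm
  push_cast
  rw [P.edge_inter _ _ hne]
  rintro (h | h)
  · have h3 : ((e + 1 : ℕ) : ZMod P.k) = ((f : ℕ) : ZMod P.k) := by push_cast; exact h.symm
    exact key f (e + 1) (by omega) (by omega) h3.symm
  · have h3 : ((e : ℕ) : ZMod P.k) = ((f + 1 : ℕ) : ZMod P.k) := by push_cast; exact h
    exact key (f + 1) e (by omega) (by omega) h3.symm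

lemma vtx_ne (P : SimplePolygon) (e f : ℕ) (h1 : f < e) (h2 : e < f + P.k) :
    P.vtx (e : ℕ) ≠ P.vtx (f : ℕ) := by
  intro h
  have h := (P.inj h).symm
  rw [ZMod.natCast_eq_natCast_iff] at h
  have := (Nat.modEq_iff_dvd' h1.le).1 h
  have := Nat.le_of_dvd (by omega) this
  omega

/-- Polygon paths `[e0, e0+m]` and `[f0, f0+n]` that are disjoint, with extreme endpoints. -/
lemma poly_false (P : SimplePolygon) (e0 m f0 n : ℕ) (h1 : f0 + n < e0) (h2 : e0 + m < f0 + P.k)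
    (ha : P.vtx (e0 : ℕ) ∈ Set.extremePoints ℝ (convexHull ℝ (Set.range P.vtx)))
    (hb : P.vtx ((e0 + m : ℕ)) ∈ Set.extremePoints ℝ (convexHull ℝ (Set.range P.vtx)))
    (hc : P.vtx (f0 : ℕ) ∈ Set.extremePoints ℝ (convexHull ℝ (Set.range P.vtx)))
    (hd : P.vtx ((f0 + n : ℕ)) ∈ Set.extremePoints ℝ (convexHull ℝ (Set.range P.vtx)))
    (a b c d : Pt) (ea : P.vtx (e0 : ℕ) = a) (eb : P.vtx ((e0 + m : ℕ)) = b)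
    (ec : P.vtx (f0 : ℕ) = c) (ed : P.vtx ((f0 + n : ℕ)) = d)
    (hs : (0 < ori a c d ∧ 0 < ori a b d ∧ ori b c d < 0 ∧ ori a b c < 0) ∨
      (ori a c d < 0 ∧ ori a b d < 0 ∧ 0 < ori b c d ∧ 0 < ori a b c)) : False := by
  have hk := P.three_le
  have : NeZero P.k := ⟨by omega⟩
  have hV : (Set.range P.vtx).Finite := Set.finite_range _
  subst ea eb ec ed
  refine paths_false (fun s => P.vtx ((e0 + s : ℕ))) (fun t => P.vtx ((f0 + t : ℕ))) m n
    (fun s hs t ht => edges_disjoint P (e0 + s) (f0 + t) (by omega) (by omega)) ?_ ?_ ?_ ?_ hs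
  · obtain ⟨f, hf⟩ := extreme_functional hV ha
    exact ⟨f, fun t ht => hf _ ⟨_, rfl⟩ (vtx_ne P e0 (f0 + t) (by omega) (by omega)).symm⟩
  · obtain ⟨f, hf⟩ := extreme_functional hV hb
    exact ⟨f, fun t ht => hf _ ⟨_, rfl⟩ (vtx_ne P (e0 + m) (f0 + t) (by omega) (by omega)).symm⟩
  · obtain ⟨f, hf⟩ := extreme_functional hV hc
    exact ⟨f, fun t ht => hf _ ⟨_, rfl⟩ (vtx_ne P (e0 + t) f0 (by omega) (by omega))⟩
  · obtain ⟨f, hf⟩ := extreme_functional hV hd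
    exact ⟨f, fun t ht => hf _ ⟨_, rfl⟩ (vtx_ne P (e0 + t) (f0 + n) (by omega) (by omega))⟩

/-- Extreme index. -/
def ExtIdx (P : SimplePolygon) (n : ℕ) : Prop :=
  n < P.k ∧ P.vtx (n : ℕ) ∈ Set.extremePoints ℝ (convexHull ℝ (Set.range P.vtx))

/-- Orientation of three indices. -/
def orn (P : SimplePolygon) (i j l : ℕ) : ℝ := ori (P.vtx (i : ℕ)) (P.vtx (j : ℕ)) (P.vtx (l : ℕ))

/-- Same sign, nonzero. -/
def SS (x y : ℝ) : Prop := 0 < x * y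

lemma SS.trans {x y z : ℝ} (h1 : SS x y) (h2 : SS y z) : SS x z := by
  unfold SS at *
  rcases pos_and_pos_or_neg_and_neg_of_mul_pos h1 with ⟨a, b⟩ | ⟨a, b⟩ <;>
  rcases pos_and_pos_or_neg_and_neg_of_mul_pos h2 with ⟨c, d⟩ | ⟨c, d⟩
  · exact mul_pos a d
  · linarith
  · linarith
  · exact mul_pos_of_neg_of_neg a d

lemma SS.symm {x y : ℝ} (h1 : SS x y) : SS y x := by
  unfold SS at *; linarith


lemma orn_ne (P : SimplePolygon)
    (hgp : ∀ p ∈ Set.range P.vtx, ∀ q ∈ Set.range P.vtx, ∀ r ∈ Set.range P.vtx,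
      p ≠ q → p ≠ r → q ≠ r → ¬ Collinear ℝ ({p, q, r} : Set Pt))
    {i j l : ℕ} (hij : i < j) (hjl : j < l) (hl : l < P.k) : orn P i j l ≠ 0 := by
  have a := (vtx_ne P j i (by omega) (by omega)).symm
  have b := (vtx_ne P l j (by omega) (by omega)).symm
  have c := (vtx_ne P l i (by omega) (by omega)).symm
  exact ori_ne_zero a (hgp _ ⟨_, rfl⟩ _ ⟨_, rfl⟩ _ ⟨_, rfl⟩ a c b)

set_option maxHeartbeats 1000000 in
lemma four (P : SimplePolygon)
    (hgp : ∀ p ∈ Set.range P.vtx, ∀ q ∈ Set.range P.vtx, ∀ r ∈ Set.range P.vtx,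
      p ≠ q → p ≠ r → q ≠ r → ¬ Collinear ℝ ({p, q, r} : Set Pt))
    {i j l m : ℕ} (hij : i < j) (hjl : j < l) (hlm : l < m)
    (hi : ExtIdx P i) (hj : ExtIdx P j) (hl : ExtIdx P l) (hm : ExtIdx P m) :
    SS (orn P i j l) (orn P i j m) ∧ SS (orn P i j l) (orn P i l m) ∧
      SS (orn P i j l) (orn P j l m) := by
  have hk := P.three_le
  have : NeZero P.k := ⟨by omega⟩
  have hV : (Set.range P.vtx).Finite := Set.finite_range _
  have hmk := hm.1
  have n1 := orn_ne P hgp hij hjl hl.1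
  have n2 := orn_ne P hgp hij (hjl.trans hlm) hm.1
  have n3 := orn_ne P hgp (hij.trans hjl) hlm hm.1
  have n4 := orn_ne P hgp hjl hlm hm.1
  have n_ij := vtx_ne P j i (by omega) (by omega)
  have n_il := vtx_ne P l i (by omega) (by omega)
  have n_im := vtx_ne P m i (by omega) (by omega)
  have n_jl := vtx_ne P l j (by omega) (by omega)
  have n_jm := vtx_ne P m j (by omega) (by omega)
  have n_lm := vtx_ne P m l (by omega) (by omega)
  obtain ⟨fi, hfi⟩ := extreme_functional hV hi.2
  obtain ⟨fj, hfj⟩ := extreme_functional hV hj.2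
  obtain ⟨fl, hfl⟩ := extreme_functional hV hl.2
  obtain ⟨fm, hfm⟩ := extreme_functional hV hm.2
  have s0 := ori_sum (P.vtx (i : ℕ)) (P.vtx (j : ℕ)) (P.vtx (l : ℕ)) (P.vtx (m : ℕ))
  have r := fun f => ori_rel f (P.vtx (i : ℕ)) (P.vtx (j : ℕ)) (P.vtx (l : ℕ)) (P.vtx (m : ℕ))
  have bad1 := poly_false P l (m - l) i (j - i) (by omega) (by omega) hl.2
    (by rw [show l + (m - l) = m by omega]; exact hm.2) hi.2
    (by rw [show i + (j - i) = j by omega]; exact hj.2) _ _ _ _ rfl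
    (by rw [show l + (m - l) = m by omega]) rfl (by rw [show i + (j - i) = j by omega])
  have ekm : P.vtx ((m + (P.k + i - m) : ℕ)) = P.vtx (i : ℕ) := by
    rw [show m + (P.k + i - m) = P.k + i by omega]; simp
  have bad2 := poly_false P m (P.k + i - m) j (l - j) (by omega) (by omega) hm.2
    (by rw [ekm]; exact hi.2) hj.2
    (by rw [show j + (l - j) = l by omega]; exact hl.2) _ _ _ _ rfl
    ekm rfl (by rw [show j + (l - j) = l by omega])
  have ci := fun h => coef_false (A := orn P j l m) (B := - orn P i l m) (C := orn P i j m)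
    (D := - orn P i j l) (by unfold orn; linarith) (by have := r fi; unfold orn; linarith)
    (hfi _ ⟨_, rfl⟩ n_ij) (hfi _ ⟨_, rfl⟩ n_il) (hfi _ ⟨_, rfl⟩ n_im) h
  have cj := fun h => coef_false (B := orn P j l m) (A := - orn P i l m) (C := orn P i j m)
    (D := - orn P i j l) (by unfold orn; linarith) (by have := r fj; unfold orn; linarith)
    (hfj _ ⟨_, rfl⟩ n_ij.symm) (hfj _ ⟨_, rfl⟩ n_jl) (hfj _ ⟨_, rfl⟩ n_jm) h
  have cl := fun h => coef_false (B := orn P j l m) (C := - orn P i l m) (A := orn P i j m)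
    (D := - orn P i j l) (by unfold orn; linarith) (by have := r fl; unfold orn; linarith)
    (hfl _ ⟨_, rfl⟩ n_il.symm) (hfl _ ⟨_, rfl⟩ n_jl.symm) (hfl _ ⟨_, rfl⟩ n_lm) h
  have cm := fun h => coef_false (B := orn P j l m) (C := - orn P i l m) (D := orn P i j m)
    (A := - orn P i j l) (by unfold orn; linarith) (by have := r fm; unfold orn; linarith)
    (hfm _ ⟨_, rfl⟩ n_im.symm) (hfm _ ⟨_, rfl⟩ n_jm.symm) (hfm _ ⟨_, rfl⟩ n_lm.symm) h
  have c1 : ∀ a b c : Pt, ori a b c = ori b c a := fun a b c => by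
    simp only [ori, cross2, Prod.fst_sub, Prod.snd_sub]; ring
  have c2 : ∀ a b c : Pt, ori a b c = - ori b a c := fun a b c => by
    simp only [ori, cross2, Prod.fst_sub, Prod.snd_sub]; ring
  have b1 : ori (P.vtx (l : ℕ)) (P.vtx (i : ℕ)) (P.vtx (j : ℕ)) = orn P i j l := by
    rw [c1]; rfl
  have b2 : ori (P.vtx (l : ℕ)) (P.vtx (m : ℕ)) (P.vtx (j : ℕ)) = orn P j l m := by
    rw [c1, c1]; rfl
  have b3 : ori (P.vtx (m : ℕ)) (P.vtx (i : ℕ)) (P.vtx (j : ℕ)) = orn P i j m := by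
    rw [c1]; rfl
  have b4 : ori (P.vtx (l : ℕ)) (P.vtx (m : ℕ)) (P.vtx (i : ℕ)) = orn P i l m := by
    rw [c1, c1]; rfl
  have d1 : ori (P.vtx (m : ℕ)) (P.vtx (j : ℕ)) (P.vtx (l : ℕ)) = orn P j l m := by
    rw [c1]; rfl
  have d2 : ori (P.vtx (m : ℕ)) (P.vtx (i : ℕ)) (P.vtx (l : ℕ)) = orn P i l m := by
    simp only [orn, ori, cross2, Prod.fst_sub, Prod.snd_sub]; ring
  have d3 : ori (P.vtx (i : ℕ)) (P.vtx (j : ℕ)) (P.vtx (l : ℕ)) = orn P i j l := rfl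
  have d4 : ori (P.vtx (m : ℕ)) (P.vtx (i : ℕ)) (P.vtx (j : ℕ)) = orn P i j m := by
    rw [c1]; rfl
  rw [b1, b2, b3, b4] at bad1
  rw [d1, d2, d3, d4] at bad2
  clear r s0
  generalize orn P i j l = x at *
  generalize orn P i j m = y at *
  generalize orn P i l m = z at *
  generalize orn P j l m = w at *
  clear hfi hfj hfl hfm
  simp only [neg_pos, neg_lt_zero] at ci cj cl cm
  unfold SS
  rcases lt_or_gt_of_ne n1 with h1 | h1 <;> rcases lt_or_gt_of_ne n2 with h2 | h2 <;>
  rcases lt_or_gt_of_ne n3 with h3 | h3 <;> rcases lt_or_gt_of_ne n4 with h4 | h4 <;>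
  first
  | exact ⟨mul_pos h1 h2, mul_pos h1 h3, mul_pos h1 h4⟩
  | exact ⟨mul_pos_of_neg_of_neg h1 h2, mul_pos_of_neg_of_neg h1 h3, mul_pos_of_neg_of_neg h1 h4⟩
  | exact (ci (Or.inl ⟨by assumption, by assumption, by assumption⟩)).elim
  | exact (ci (Or.inr ⟨by assumption, by assumption, by assumption⟩)).elim
  | exact (cj (Or.inl ⟨by assumption, by assumption, by assumption⟩)).elim
  | exact (cj (Or.inr ⟨by assumption, by assumption, by assumption⟩)).elim
  | exact (cl (Or.inl ⟨by assumption, by assumption, by assumption⟩)).elim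
  | exact (cl (Or.inr ⟨by assumption, by assumption, by assumption⟩)).elim
  | exact (cm (Or.inl ⟨by assumption, by assumption, by assumption⟩)).elim
  | exact (cm (Or.inr ⟨by assumption, by assumption, by assumption⟩)).elim
  | exact (bad1 (Or.inl ⟨by assumption, by assumption, by assumption, by assumption⟩)).elim
  | exact (bad1 (Or.inr ⟨by assumption, by assumption, by assumption, by assumption⟩)).elim
  | exact (bad2 (Or.inl ⟨by assumption, by assumption, by assumption, by assumption⟩)).elim
  | exact (bad2 (Or.inr ⟨by assumption, by assumption, by assumption, by assumption⟩)).elim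

lemma SS.refl' {x : ℝ} (h : x ≠ 0) : SS x x := mul_self_pos.2 h

lemma move_last (P : SimplePolygon)
    (hgp : ∀ p ∈ Set.range P.vtx, ∀ q ∈ Set.range P.vtx, ∀ r ∈ Set.range P.vtx,
      p ≠ q → p ≠ r → q ≠ r → ¬ Collinear ℝ ({p, q, r} : Set Pt))
    {i j l l' : ℕ} (hij : i < j) (hjl : j < l) (hjl' : j < l')
    (hi : ExtIdx P i) (hj : ExtIdx P j) (hl : ExtIdx P l) (hl' : ExtIdx P l') :
    SS (orn P i j l) (orn P i j l') := by
  rcases lt_trichotomy l l' with h | rfl | h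
  · exact (four P hgp hij hjl h hi hj hl hl').1
  · exact SS.refl' (orn_ne P hgp hij hjl hl.1)
  · exact (four P hgp hij hjl' h hi hj hl' hl).1.symm

lemma move_mid (P : SimplePolygon)
    (hgp : ∀ p ∈ Set.range P.vtx, ∀ q ∈ Set.range P.vtx, ∀ r ∈ Set.range P.vtx,
      p ≠ q → p ≠ r → q ≠ r → ¬ Collinear ℝ ({p, q, r} : Set Pt))
    {i j j' l : ℕ} (hij : i < j) (hjl : j < l) (hij' : i < j') (hjl' : j' < l)
    (hi : ExtIdx P i) (hj : ExtIdx P j) (hj' : ExtIdx P j') (hl : ExtIdx P l) :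
    SS (orn P i j l) (orn P i j' l) := by
  rcases lt_trichotomy j j' with h | rfl | h
  · have := four P hgp hij h hjl' hi hj hj' hl
    exact this.1.symm.trans this.2.1
  · exact SS.refl' (orn_ne P hgp hij hjl hl.1)
  · have := four P hgp hij' h hjl hi hj' hj hl
    exact this.2.1.symm.trans this.1

lemma move_first (P : SimplePolygon)
    (hgp : ∀ p ∈ Set.range P.vtx, ∀ q ∈ Set.range P.vtx, ∀ r ∈ Set.range P.vtx,
      p ≠ q → p ≠ r → q ≠ r → ¬ Collinear ℝ ({p, q, r} : Set Pt))
    {i i' j l : ℕ} (hij : i < j) (hjl : j < l) (hij' : i' < j)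
    (hi : ExtIdx P i) (hi' : ExtIdx P i') (hj : ExtIdx P j) (hl : ExtIdx P l) :
    SS (orn P i j l) (orn P i' j l) := by
  rcases lt_trichotomy i i' with h | rfl | h
  · have := four P hgp h hij' hjl hi hi' hj hl
    exact this.2.1.symm.trans this.2.2
  · exact SS.refl' (orn_ne P hgp hij hjl hl.1)
  · have := four P hgp h hij hjl hi' hi hj hl
    exact this.2.2.symm.trans this.2.1

/-- All increasing triples of extreme indices have the same orientation. -/
lemma all_same (P : SimplePolygon)
    (hgp : ∀ p ∈ Set.range P.vtx, ∀ q ∈ Set.range P.vtx, ∀ r ∈ Set.range P.vtx,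
      p ≠ q → p ≠ r → q ≠ r → ¬ Collinear ℝ ({p, q, r} : Set Pt))
    {i j l i' j' l' : ℕ} (hij : i < j) (hjl : j < l) (hij' : i' < j') (hjl' : j' < l')
    (hi : ExtIdx P i) (hj : ExtIdx P j) (hl : ExtIdx P l)
    (hi' : ExtIdx P i') (hj' : ExtIdx P j') (hl' : ExtIdx P l') :
    SS (orn P i j l) (orn P i' j' l') := by
  obtain ⟨M, hM, h1, h2⟩ : ∃ M, ExtIdx P M ∧ l ≤ M ∧ l' ≤ M := by
    rcases le_total l l' with h | h
    · exact ⟨l', hl', h, le_rfl⟩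
    · exact ⟨l, hl, le_rfl, h⟩
  obtain ⟨N, hN, h3, h4⟩ : ∃ N, ExtIdx P N ∧ N ≤ i ∧ N ≤ i' := by
    rcases le_total i i' with h | h
    · exact ⟨i, hi, le_rfl, h⟩
    · exact ⟨i', hi', h, le_rfl⟩
  have a1 := move_last P hgp hij hjl (hjl.trans_le h1) hi hj hl hM
  have a2 := move_first P hgp hij (hjl.trans_le h1) (h3.trans_lt hij) hi hN hj hM
  have b1 := move_last P hgp hij' hjl' (hjl'.trans_le h2) hi' hj' hl' hM
  have b2 := move_first P hgp hij' (hjl'.trans_le h2) (h4.trans_lt hij') hi' hN hj' hM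
  have c := move_mid P hgp (h3.trans_lt hij) (hjl.trans_le h1) (h4.trans_lt hij')
    (hjl'.trans_le h2) hN hj hj' hM
  exact ((a1.trans a2).trans c).trans (b1.trans b2).symm

/-- The vertices of a simple polygon `P` (no three of whose vertices are
collinear) that are extreme points of the convex hull of the vertex set occur along `P`
in convex-position cyclic order: in one of the two orientations of `P`, every triple of
extreme vertices taken in the cyclic order of `P` is counterclockwise (positively
oriented). -/
theorem hull_vertices_in_polygon_order (P : SimplePolygon)
    (hgp : ∀ p ∈ Set.range P.vtx, ∀ q ∈ Set.range P.vtx, ∀ r ∈ Set.range P.vtx,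
      p ≠ q → p ≠ r → q ≠ r → ¬ Collinear ℝ ({p, q, r} : Set Pt)) :
    (∀ i j l : ZMod P.k, i.val < j.val → j.val < l.val →
      P.vtx i ∈ Set.extremePoints ℝ (convexHull ℝ (Set.range P.vtx)) →
      P.vtx j ∈ Set.extremePoints ℝ (convexHull ℝ (Set.range P.vtx)) →
      P.vtx l ∈ Set.extremePoints ℝ (convexHull ℝ (Set.range P.vtx)) →
      0 < cross2 (P.vtx j - P.vtx i) (P.vtx l - P.vtx i)) ∨
    (∀ i j l : ZMod P.k, i.val < j.val → j.val < l.val →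
      P.vtx i ∈ Set.extremePoints ℝ (convexHull ℝ (Set.range P.vtx)) →
      P.vtx j ∈ Set.extremePoints ℝ (convexHull ℝ (Set.range P.vtx)) →
      P.vtx l ∈ Set.extremePoints ℝ (convexHull ℝ (Set.range P.vtx)) →
      cross2 (P.vtx j - P.vtx i) (P.vtx l - P.vtx i) < 0) := by
  have hk := P.three_le
  have : NeZero P.k := ⟨by omega⟩
  have hE : ∀ i : ZMod P.k, P.vtx i ∈ Set.extremePoints ℝ (convexHull ℝ (Set.range P.vtx)) →
      ExtIdx P i.val := fun i hi => ⟨ZMod.val_lt i, by rw [ZMod.natCast_zmod_val]; exact hi⟩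
  have hO : ∀ i j l : ZMod P.k, cross2 (P.vtx j - P.vtx i) (P.vtx l - P.vtx i) =
      orn P i.val j.val l.val := fun i j l => by
    simp only [orn, ori, ZMod.natCast_zmod_val]
  by_cases hex : ∃ i j l : ℕ, i < j ∧ j < l ∧ ExtIdx P i ∧ ExtIdx P j ∧ ExtIdx P l ∧ 0 < orn P i j l
  · obtain ⟨i', j', l', hij', hjl', hi', hj', hl', hpos⟩ := hex
    left
    intro i j l hij hjl hi hj hl
    have := all_same P hgp hij' hjl' hij hjl hi' hj' hl' (hE i hi) (hE j hj) (hE l hl)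
    rw [hO]
    exact (pos_iff_pos_of_mul_pos this).1 hpos
  · right
    intro i j l hij hjl hi hj hl
    rw [hO]
    rcases lt_or_gt_of_ne (orn_ne P hgp hij hjl (ZMod.val_lt l)) with h | h
    · exact h
    · exact absurd ⟨_, _, _, hij, hjl, hE i hi, hE j hj, hE l hl, h⟩ hex
end
end
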